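/- arXiv:2505.07756 — 3 statements merged into one kernel-verified Lean document; each statement's English description precedes it below -/
import Mathlib

section
/- Let n ≥ 7 and let 𝒻 be a family of 3-element subsets of [n] = {1, …, n} that shatters no 3-element subset of [n] (i.e., 𝒻 has VC-dimension at most 2). Then |𝒻| ≤ C(n−1, 2) + 1, where C(a, b) denotes the binomial coefficient. -/
/-- A family `𝒻` shatters a set `S` if every subset of `S` is the trace of some member of `𝒻`. -/
def Shatters (𝒻 : Finset (Finset ℕ)) (S : Finset ℕ) : Prop :=
  ∀ T ⊆ S, ∃ F ∈ 𝒻, F ∩ S = T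

open Finset hiding Shatters

/-!
If `#V = n` and `𝒻` has more than `(n - 1).choose 2` triples, then a linear dependence over `ZMod 2`
between the incidence vectors of its members gives a nonempty subfamily `𝒵` in which every pair lies
in an even number of members. Hence a pair inside a member of `𝒵` lies in a second one, so on a
member of `𝒵` all traces of size two occur and a trace of size at most one has to be missing:
either the whole triple meets all of `𝒻`, or two of its vertices cover the link of the third.

Let `𝒻` be a counterexample with `n ≥ 8` minimal. Deleting a vertex shows that every vertex has
degree at least `n - 1`. If `{b, c}` covers the link of `a`, then deleting `a` and moving the
triples `{a, b, x}`, `{a, c, x}` to `{b, c, x}` yields an unshattered family on one vertex less, and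
its size forces a tetrahedron `{a, b, c, x}` in `𝒻`; applying the dependence to `𝒻` without
`{a, b, c}` leads to a contradiction. So all members of `𝒵` meet all of `𝒻`, and a vertex away from
the neighbourhood of one of them has degree at most six. The case `n = 7` is a backtracking search
over the families of triples of `{0, …, 6}`.
-/

theorem exists_subset_forall_even_card_filter {β γ : Type*} {s : Finset β}
    {t : Finset γ} (r : γ → β → Prop) [∀ y, DecidablePred (r y)] (h : #t < #s) :
    ∃ u ⊆ s, u.Nonempty ∧ ∀ y ∈ t, Even #{x ∈ u | r y x} := by
  classical
  let v : s → t → ZMod 2 := fun x y => if r y x then 1 else 0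
  have hv : ¬ LinearIndependent (ZMod 2) v := fun hv =>
    h.not_ge (by simpa using hv.fintype_card_le_finrank)
  obtain ⟨g, hg, x, hx⟩ := Fintype.not_linearIndependent_iff.1 hv
  refine ⟨{x ∈ s.attach | g x ≠ 0}.image (↑), ?_, ⟨x, by simpa using hx⟩, fun y hy => ?_⟩
  · simp [image_subset_iff]
  have hsum : ∑ x : s, g x * v x ⟨y, hy⟩ = 0 := by simpa using congrFun hg ⟨y, hy⟩
  refine (ZMod.natCast_eq_zero_iff_even).1 (Eq.trans ?_ hsum)
  rw [filter_image, card_image_of_injective _ Subtype.val_injective, filter_filter, card_filter,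
    Nat.cast_sum]
  refine sum_congr rfl fun z _ => ?_
  have hz : g z = 0 ∨ g z = 1 := by generalize g z = c; revert c; decide
  by_cases hr : r y z <;> rcases hz with hz | hz <;> simp [v, hr, hz]

section PairClosed

variable {α : Type*} [DecidableEq α] {V : Finset α} {𝒢 : Finset (Finset α)}

/-- Every pair inside a member of `𝒢` lies in a further member of `𝒢`. -/
def PairClosed (𝒢 : Finset (Finset α)) : Prop :=
  ∀ F ∈ 𝒢, ∀ P ⊆ F, #P = 2 → ∃ G ∈ 𝒢, G ≠ F ∧ P ⊆ G

theorem even_sum_card_filter_pair_subset (hV : ∀ F ∈ 𝒢, F ⊆ V) (h3 : ∀ F ∈ 𝒢, #F = 3) (v : α) :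
    Even (∑ u ∈ V.erase v, #{F ∈ 𝒢 | {u, v} ⊆ F}) := by
  simp_rw [card_filter]
  rw [sum_comm]
  refine even_sum _ fun F hF => ?_
  rw [← card_filter]
  by_cases hv : v ∈ F
  · have : {u ∈ V.erase v | {u, v} ⊆ F} = F.erase v := by grind [hV F hF]
    rw [this, card_erase_of_mem hv, h3 F hF]
    decide
  · simp [insert_subset_iff, hv]

theorem even_card_filter_pair_subset_of_forall_erase (hV : ∀ F ∈ 𝒢, F ⊆ V)
    (h3 : ∀ F ∈ 𝒢, #F = 3) {r : α} (hr : r ∈ V)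
    (heven : ∀ P ∈ (V.erase r).powersetCard 2, Even #{F ∈ 𝒢 | P ⊆ F}) {v : α}
    (hv : v ∈ V.erase r) : Even #{F ∈ 𝒢 | {r, v} ⊆ F} := by
  have hsum := even_sum_card_filter_pair_subset hV h3 v
  have hrv : r ∈ V.erase v := by grind
  rw [← add_sum_erase _ _ hrv, Nat.even_add] at hsum
  refine hsum.2 (even_sum _ fun u hu => heven _ (mem_powersetCard.2 ⟨by grind, ?_⟩))
  exact card_pair (by grind)

theorem PairClosed.of_even (heven : ∀ F ∈ 𝒢, ∀ P ⊆ F, #P = 2 → Even #{G ∈ 𝒢 | P ⊆ G}) :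
    PairClosed 𝒢 := by
  intro F hF P hPF hP
  have hpos : 0 < #{G ∈ 𝒢 | P ⊆ G} := card_pos.2 ⟨F, mem_filter.2 ⟨hF, hPF⟩⟩
  have hone : 1 < #{G ∈ 𝒢 | P ⊆ G} := by
    obtain ⟨k, hk⟩ := heven F hF P hPF hP
    omega
  obtain ⟨G, hG, hne⟩ := exists_mem_ne hone F
  exact ⟨G, (mem_filter.1 hG).1, hne, (mem_filter.1 hG).2⟩

end PairClosed

-- The pairs avoiding a fixed vertex impose `(#V - 1).choose 2` parity conditions, and the remaining
-- pairs then take care of themselves.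
theorem exists_pairClosed {α : Type*} {V : Finset α} {𝒢 : Finset (Finset α)}
    (hV : ∀ F ∈ 𝒢, F ⊆ V) (h3 : ∀ F ∈ 𝒢, #F = 3) (hcard : (#V - 1).choose 2 < #𝒢) :
    ∃ 𝒵 ⊆ 𝒢, 𝒵.Nonempty ∧ PairClosed 𝒵 := by
  classical
  obtain ⟨F₀, hF₀⟩ : 𝒢.Nonempty := card_pos.1 (by omega)
  obtain ⟨r, hr⟩ : F₀.Nonempty := card_pos.1 (by rw [h3 F₀ hF₀]; omega)
  have hrV := hV F₀ hF₀ hr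
  obtain ⟨𝒵, h𝒵, hne, heven⟩ := exists_subset_forall_even_card_filter (s := 𝒢)
    (t := (V.erase r).powersetCard 2) (· ⊆ ·)
    (by rwa [card_powersetCard, card_erase_of_mem hrV])
  refine ⟨𝒵, h𝒵, hne, .of_even fun F hF P hPF hP => ?_⟩
  have hPV : P ⊆ V := hPF.trans (hV F (h𝒵 hF))
  by_cases hrP : r ∈ P
  · obtain ⟨v, hv⟩ := card_eq_one.1 (show #(P.erase r) = 1 by rw [card_erase_of_mem hrP, hP])
    have hPv : P = {r, v} := by rw [← insert_erase hrP, hv]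
    rw [hPv]
    exact even_card_filter_pair_subset_of_forall_erase (fun F hF => hV F (h𝒵 hF))
      (fun F hF => h3 F (h𝒵 hF)) hrV heven (by grind)
  · exact heven P (mem_powersetCard.2 ⟨subset_erase.2 ⟨hPV, hrP⟩, hP⟩)

/-- `{a, b, c}` is a member of `𝒻`, with `a`, `b`, `c` distinct. -/
def Edge {α : Type*} [DecidableEq α] (𝒻 : Finset (Finset α)) (a b c : α) : Prop :=
  (a ≠ b ∧ a ≠ c ∧ b ≠ c) ∧ {a, b, c} ∈ 𝒻

/-- The pair `{b, c}` covers the link of `a`: no member of `𝒻` meets `{a, b, c}` in `{a}`. -/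
def LinkCover {α : Type*} (𝒻 : Finset (Finset α)) (a b c : α) : Prop :=
  ∀ F ∈ 𝒻, a ∈ F → b ∈ F ∨ c ∈ F

/-- The triple `{a, b, c}` meets every member of `𝒻`. -/
def Cover {α : Type*} (𝒻 : Finset (Finset α)) (a b c : α) : Prop :=
  ∀ F ∈ 𝒻, a ∈ F ∨ b ∈ F ∨ c ∈ F

section Edge

variable {α : Type*} [DecidableEq α] {V : Finset α} {𝒻 𝒵 : Finset (Finset α)} {a b c d e f : α}

theorem Edge.ne (h : Edge 𝒻 a b c) : a ≠ b ∧ a ≠ c ∧ b ≠ c := h.1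

theorem Edge.swap_left (h : Edge 𝒻 a b c) : Edge 𝒻 b a c :=
  ⟨by grind [Edge.ne], by rw [insert_comm]; exact h.2⟩

theorem Edge.swap_right (h : Edge 𝒻 a b c) : Edge 𝒻 a c b :=
  ⟨by grind [Edge.ne], by rw [pair_comm]; exact h.2⟩

theorem Edge.rotate (h : Edge 𝒻 a b c) : Edge 𝒻 b c a := h.swap_left.swap_right

theorem Edge.mono (h𝒵 : 𝒵 ⊆ 𝒻) (h : Edge 𝒵 a b c) : Edge 𝒻 a b c := ⟨h.1, h𝒵 h.2⟩

theorem ne_of_edge_of_not_edge (hbca : ¬ Edge 𝒻 b c a) (h : Edge 𝒻 a d e) :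
    s(d, e) ≠ s(b, c) := by
  intro heq
  rcases Sym2.eq_iff.1 heq with ⟨rfl, rfl⟩ | ⟨rfl, rfl⟩
  exacts [hbca h.rotate, hbca h.rotate.swap_left]

theorem exists_edge_of_mem {F : Finset α} (hF : F ∈ 𝒻) (h3 : #F = 3) :
    ∃ a b c, F = {a, b, c} ∧ Edge 𝒻 a b c := by
  obtain ⟨a, b, c, hab, hac, hbc, rfl⟩ := card_eq_three.1 h3
  exact ⟨a, b, c, rfl, ⟨hab, hac, hbc⟩, hF⟩

theorem exists_edge_of_mem_of_mem {F : Finset α} (hF : F ∈ 𝒻) (h3 : #F = 3) (ha : a ∈ F) :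
    ∃ b c, F = {a, b, c} ∧ Edge 𝒻 a b c := by
  obtain ⟨x, y, z, rfl, he⟩ := exists_edge_of_mem hF h3
  simp only [mem_insert, mem_singleton] at ha
  rcases ha with rfl | rfl | rfl
  · exact ⟨y, z, rfl, he⟩
  · exact ⟨x, z, insert_comm .., he.swap_left⟩
  · exact ⟨x, y, by grind, he.rotate.rotate⟩

theorem exists_edge_of_pair_subset {F : Finset α} (hF : F ∈ 𝒻) (h3 : #F = 3) (hab : a ≠ b)
    (ha : a ∈ F) (hb : b ∈ F) : ∃ c, F = {a, b, c} ∧ Edge 𝒻 a b c := by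
  obtain ⟨x, y, rfl, he⟩ := exists_edge_of_mem_of_mem hF h3 ha
  obtain rfl | rfl : b = x ∨ b = y := by grind
  exacts [⟨y, rfl, he⟩, ⟨x, by rw [pair_comm], he.swap_right⟩]

theorem PairClosed.exists_edge (h𝒵 : PairClosed 𝒵) (h3 : ∀ F ∈ 𝒵, #F = 3) (h : Edge 𝒵 a b c) :
    ∃ d ≠ c, Edge 𝒵 a b d := by
  obtain ⟨F, hF, hne, hsub⟩ := h𝒵 _ h.2 {a, b} (by grind) (card_pair h.ne.1)
  obtain ⟨d, rfl, hd⟩ := exists_edge_of_pair_subset hF (h3 F hF) h.ne.1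
    (hsub (by simp)) (hsub (by simp))
  exact ⟨d, by rintro rfl; exact hne rfl, hd⟩

theorem LinkCover.swap {α : Type*} {𝒻 : Finset (Finset α)} {a b c : α} (h : LinkCover 𝒻 a b c) :
    LinkCover 𝒻 a c b := fun F hF ha => (h F hF ha).symm

theorem LinkCover.eq_or_eq (h : LinkCover 𝒻 a b c) (he : Edge 𝒻 d e f)
    (ha : d = a ∨ e = a ∨ f = a) : d = b ∨ d = c ∨ e = b ∨ e = c ∨ f = b ∨ f = c := by
  have := h _ he.2 (by grind)
  grind

theorem Cover.swap_right {α : Type*} {𝒻 : Finset (Finset α)} {a b c : α} (h : Cover 𝒻 a b c) :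
    Cover 𝒻 a c b := fun F hF => (h F hF).imp_right Or.symm

theorem Cover.eq_or_eq (h : Cover 𝒻 a b c) (he : Edge 𝒻 d e f) :
    d = a ∨ d = b ∨ d = c ∨ e = a ∨ e = b ∨ e = c ∨ f = a ∨ f = b ∨ f = c := by
  have := h _ he.2
  grind

end Edge

/-- A family of triples of `V` that shatters none of its members. -/
structure Unshattered {α : Type*} [DecidableEq α] (V : Finset α) (𝒻 : Finset (Finset α)) :
    Prop where
  subset : ∀ F ∈ 𝒻, F ⊆ V
  card_eq : ∀ F ∈ 𝒻, #F = 3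
  not_shatters : ∀ F ∈ 𝒻, ¬ 𝒻.Shatters F

namespace Unshattered

variable {α : Type*} [DecidableEq α] {V : Finset α} {𝒻 𝒵 : Finset (Finset α)} {a b c : α}

theorem mem_of_edge (h𝒻 : Unshattered V 𝒻) (h : Edge 𝒻 a b c) : a ∈ V ∧ b ∈ V ∧ c ∈ V := by
  simpa [insert_subset_iff] using h𝒻.subset _ h.2

theorem edge_cases (h𝒻 : Unshattered V 𝒻) (h : Edge 𝒻 a b c) :
    (∀ d, Edge 𝒻 a b d → d = c) ∨ (∀ d, Edge 𝒻 a c d → d = b) ∨ (∀ d, Edge 𝒻 b c d → d = a) ∨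
      LinkCover 𝒻 a b c ∨ LinkCover 𝒻 b a c ∨ LinkCover 𝒻 c a b ∨ Cover 𝒻 a b c := by
  by_contra! hcon
  simp only [LinkCover, Cover] at hcon
  push Not at hcon
  obtain ⟨⟨p, hp, hpc⟩, ⟨q, hq, hqb⟩, ⟨r, hr, hra⟩, ⟨A, hA, hA'⟩, ⟨B, hB, hB'⟩, ⟨C, hC, hC'⟩,
    ⟨D, hD, hD'⟩⟩ := hcon
  refine h𝒻.not_shatters _ h.2 fun T hT => ?_
  have := h.ne
  by_cases hTa : a ∈ T <;> by_cases hTb : b ∈ T <;> by_cases hTc : c ∈ T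
  · exact ⟨_, h.2, by grind⟩
  · exact ⟨_, hp.2, by grind [Edge.ne]⟩
  · exact ⟨_, hq.2, by grind [Edge.ne]⟩
  · exact ⟨A, hA, by grind⟩
  · exact ⟨_, hr.2, by grind [Edge.ne]⟩
  · exact ⟨B, hB, by grind⟩
  · exact ⟨C, hC, by grind⟩
  · exact ⟨D, hD, by grind⟩

theorem cover_cases (h𝒻 : Unshattered V 𝒻) (h : Edge 𝒻 a b c) (hab : ∃ d ≠ c, Edge 𝒻 a b d)
    (hac : ∃ d ≠ b, Edge 𝒻 a c d) (hbc : ∃ d ≠ a, Edge 𝒻 b c d) :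
    LinkCover 𝒻 a b c ∨ LinkCover 𝒻 b a c ∨ LinkCover 𝒻 c a b ∨ Cover 𝒻 a b c := by
  have := h𝒻.edge_cases h
  grind

theorem cover_cases_of_pairClosed (h𝒻 : Unshattered V 𝒻) (h𝒵𝒻 : 𝒵 ⊆ 𝒻) (h𝒵 : PairClosed 𝒵)
    (h : Edge 𝒵 a b c) :
    LinkCover 𝒻 a b c ∨ LinkCover 𝒻 b a c ∨ LinkCover 𝒻 c a b ∨ Cover 𝒻 a b c := by
  have hpair : ∀ {x y z}, Edge 𝒵 x y z → ∃ d ≠ z, Edge 𝒻 x y d := fun he =>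
    (h𝒵.exists_edge (fun F hF => h𝒻.card_eq F (h𝒵𝒻 hF)) he).imp fun _ hd => hd.imp_right (.mono h𝒵𝒻)
  exact h𝒻.cover_cases (h.mono h𝒵𝒻) (hpair h) (hpair h.swap_right) (hpair h.rotate)

end Unshattered

/-! ### Seven vertices -/

section Mask

/-- The number whose binary digits `1` stand at the positions in `l`. -/
def mask (l : List ℕ) : ℕ := l.foldr (fun i m => 2 ^ i ||| m) 0

theorem testBit_mask {l : List ℕ} {i : ℕ} : (mask l).testBit i ↔ i ∈ l := by
  induction l with
  | nil => simp [mask]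
  | cons j l ih =>
    simp only [mask, List.foldr_cons, Nat.testBit_or, Nat.testBit_two_pow, Bool.or_eq_true,
      decide_eq_true_eq, List.mem_cons] at ih ⊢
    rw [ih, eq_comm]

/-- `x` has more than `n` binary digits `1`; `x &&& (x - 1)` erases the last of them. -/
def moreBits : ℕ → ℕ → Bool
  | 0, x => x != 0
  | n + 1, x => moreBits n (x &&& (x - 1))

theorem lt_card_of_moreBits {n x : ℕ} (h : moreBits n x) {B : Finset ℕ}
    (hB : ∀ i, x.testBit i → i ∈ B) : n < #B := by
  induction n generalizing x B with
  | zero =>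
    obtain ⟨i, hi⟩ := Nat.exists_testBit_of_ne_zero (bne_iff_ne.1 h)
    exact card_pos.2 ⟨i, hB i hi⟩
  | succ n ih =>
    have hx : x ≠ 0 := by
      rintro rfl
      simpa using ih (B := ∅) h (by simp)
    have hlt : x &&& (x - 1) < x := Nat.and_le_right.trans_lt (Nat.sub_one_lt hx)
    obtain ⟨i, hi⟩ := Nat.exists_testBit_ne_of_ne hlt.ne
    have hbit : x.testBit i ∧ (x - 1).testBit i = false := by
      simpa [Nat.testBit_and] using hi
    have := ih h (B := B.erase i) fun j hj => by
      rw [Nat.testBit_and, Bool.and_eq_true] at hj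
      exact mem_erase.2 ⟨by grind, hB j hj.1⟩
    rw [card_erase_of_mem (hB i hbit.1)] at this
    omega

theorem land_eq_zero {m n : ℕ} (h : ∀ i, m.testBit i → ¬ n.testBit i) : m &&& n = 0 :=
  Nat.eq_of_testBit_eq fun i => by grind

end Mask

section Search

/-- The bit masks of the triples of `{0, …, 6}`. -/
def triples : List ℕ := ((List.range 7).sublistsLen 3).map mask

/-- The traces of size at most one on the triple with bit mask `t`. -/
def smallTraces (t : ℕ) : List ℕ :=
  (0 :: (List.range 7).map (2 ^ ·)).filter fun p => p &&& t == p

/-- The proper traces on the triple with bit mask `t`. -/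
def properTraces (t : ℕ) : List ℕ := (List.range t).filter fun p => p &&& t == p

/-- The family, encoded by a mask, of all triples whose trace on `t` is `p`. -/
def fiber (t p : ℕ) : ℕ := mask (triples.filter fun u => u &&& t == p)

/-- Backtracking over the families of triples that contain `inn`, avoid `out` and, for each item
`(2 ^ t, ks)` such that they contain `t`, avoid one of the families in `ks`; families are encoded by
masks. The value `true` means that each of them misses more than 18 triples. -/
def search : List (ℕ × List ℕ) → ℕ → ℕ → Bool
  | [], _, out => moreBits 18 out
  | (t, ks) :: items, inn, out =>
    moreBits 18 out ||
      ((inn &&& t != 0 || search items inn (out ||| t)) &&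
        (out &&& t != 0 || (ks.any fun k => k &&& out == k) && search items (inn ||| t) out ||
          ks.all fun k => k &&& (inn ||| t) != 0 || search items (inn ||| t) (out ||| k)))

/-- No family of at least 17 triples of `{0, …, 6}` shatters none of its members, contains the
triples `ins`, misses a trace of size at most one on each of these, and, for every `(t, p)` in
`outs`, misses the trace `p` on `t`. -/
def refutes (ins : List (List ℕ)) (outs : List (List ℕ × List ℕ)) : Bool :=
  search ((ins.map mask).map (fun t => (2 ^ t, (smallTraces t).map (fiber t))) ++
      (triples.filter (!(ins.map mask).elem ·)).map fun t =>
        (2 ^ t, (properTraces t).map (fiber t)))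
    (mask (ins.map mask))
    (mask (triples.filter fun u => outs.any fun p => u &&& mask p.1 == mask p.2))

theorem search_eq_false {s : ℕ → Prop} {items : List (ℕ × List ℕ)}
    (hs : ∀ out : ℕ, (∀ u, out.testBit u → ¬ s u) → ¬ moreBits 18 out)
    (hitems : ∀ i ∈ items, ∃ t, i.1 = 2 ^ t ∧ (s t → ∃ k ∈ i.2, ∀ u, k.testBit u → ¬ s u))
    {inn out : ℕ} (hinn : ∀ u, inn.testBit u → s u) (hout : ∀ u, out.testBit u → ¬ s u) :
    search items inn out = false := by
  induction items generalizing inn out with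
  | nil => exact Bool.eq_false_iff.2 (hs out hout)
  | cons i items ih =>
    obtain ⟨_, ks⟩ := i
    obtain ⟨⟨t, rfl, hks⟩, htail⟩ := List.forall_mem_cons.1 hitems
    have hor : ∀ {p : ℕ → Prop} {m k : ℕ}, (∀ u, m.testBit u → p u) → (∀ u, k.testBit u → p u) →
        ∀ u, (m ||| k).testBit u → p u := by
      intro p m k hm hk u hu
      rw [Nat.testBit_or, Bool.or_eq_true] at hu
      exact hu.elim (hm u) (hk u)
    have hbit : ∀ {u}, (2 ^ t).testBit u → u = t := fun {u} hu => by
      rw [Nat.testBit_two_pow, decide_eq_true_eq] at hu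
      exact hu.symm
    rw [search, Bool.or_eq_false_iff, Bool.and_eq_false_iff]
    refine ⟨Bool.eq_false_iff.2 (hs out hout), ?_⟩
    by_cases hst : s t
    · right
      have hinn' := hor hinn fun u hu => hbit hu ▸ hst
      obtain ⟨k, hk, hks⟩ := hks hst
      have hzero := land_eq_zero fun u hu ht => hout u hu (hbit ht ▸ hst)
      have hkzero := land_eq_zero fun u hu hi => hks u hu (hinn' u hi)
      simp only [Bool.or_eq_false_iff, Bool.and_eq_false_iff, ih htail hinn' hout, or_true,
        and_true, List.all_eq_false]
      exact ⟨by simp [hzero], k, hk, by simp [hkzero, ih htail hinn' (hor hout hks)]⟩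
    · left
      have hzero := land_eq_zero fun u hu ht => hst (hbit ht ▸ hinn u hu)
      simp [hzero, ih htail hinn (hor hout fun _ hu => hbit hu ▸ hst)]

end Search

section Decode

variable {α : Type*} [DecidableEq α] {L l : List α} {t u : ℕ}

/-- The set of the entries of `L` whose positions are binary digits `1` of `u`. -/
def decode (L : List α) (u : ℕ) : Finset α := {x ∈ L.toFinset | u.testBit (L.idxOf x)}

theorem decode_land : decode L (u &&& t) = decode L u ∩ decode L t := by
  ext x
  simp only [decode, mem_filter, mem_inter, Nat.testBit_and, Bool.and_eq_true]
  tauto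

theorem decode_mask_map_idxOf (hl : l ⊆ L) : decode L (mask (l.map L.idxOf)) = l.toFinset := by
  ext x
  simp only [decode, mem_filter, List.mem_toFinset, testBit_mask, List.mem_map]
  constructor
  · rintro ⟨-, y, hy, hyx⟩
    rwa [← (List.idxOf_inj (hl hy)).1 hyx]
  · exact fun hx => ⟨hl hx, x, hx, rfl⟩

theorem exists_mem_properTraces {T : Finset α} (hT : T ⊂ decode L t) :
    ∃ p ∈ properTraces t, decode L p = T := by
  have hTL : T.toList ⊆ L := fun x hx => by
    simpa using (mem_filter.1 (hT.1 (mem_toList.1 hx))).1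
  have hdecode : decode L (mask (T.toList.map L.idxOf) &&& t) = T := by
    rw [decode_land, decode_mask_map_idxOf hTL, toList_toFinset, inter_eq_left.2 hT.1]
  refine ⟨_, ?_, hdecode⟩
  have hne : mask (T.toList.map L.idxOf) &&& t ≠ t := fun h => hT.ne (by rw [← hdecode, h])
  simpa [properTraces, Nat.and_assoc] using lt_of_le_of_ne Nat.and_le_right hne

theorem exists_mem_smallTraces (hL : L.length = 7) {T : Finset α} (hT : T ⊆ decode L t)
    (hcard : #T ≤ 1) : ∃ p ∈ smallTraces t, decode L p = T := by
  rcases T.eq_empty_or_nonempty with rfl | hne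
  · exact ⟨0, by simp [smallTraces], by simp [decode]⟩
  · obtain ⟨x, rfl⟩ := card_eq_one.1 (hcard.antisymm hne.card_pos)
    obtain ⟨hxL, hx⟩ := mem_filter.1 (singleton_subset_iff.1 hT)
    have hland : 2 ^ L.idxOf x &&& t = 2 ^ L.idxOf x :=
      Nat.eq_of_testBit_eq fun i => by
        rw [Nat.testBit_and, Nat.testBit_two_pow]
        grind
    refine ⟨2 ^ L.idxOf x, ?_, ?_⟩
    · have : L.idxOf x < 7 := hL ▸ List.idxOf_lt_length_of_mem (List.mem_toFinset.1 hxL)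
      simp only [smallTraces, List.mem_filter, List.mem_cons, List.mem_map, List.mem_range,
        beq_iff_eq]
      exact ⟨.inr ⟨_, this, rfl⟩, hland⟩
    · simpa [mask] using decode_mask_map_idxOf (l := [x]) (by simpa using hxL)

theorem mask_mem_triples : ∀ i j k : Fin 7, i ≠ j → i ≠ k → j ≠ k →
    mask [↑i, ↑j, ↑k] ∈ triples := by decide +kernel

theorem exists_mem_triples (hL : L.length = 7) {T : Finset α} (hT : T ⊆ L.toFinset) (h3 : #T = 3) :
    ∃ u ∈ triples, decode L u = T := by
  obtain ⟨x, y, z, hxy, hxz, hyz, rfl⟩ := card_eq_three.1 h3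
  simp only [insert_subset_iff, singleton_subset_iff, List.mem_toFinset] at hT
  obtain ⟨hx, hy, hz⟩ := hT
  refine ⟨_, ?_, (decode_mask_map_idxOf (l := [x, y, z]) (by simp [hx, hy, hz])).trans (by simp)⟩
  have hlt : ∀ {v}, v ∈ L → L.idxOf v < 7 := fun hv => hL ▸ List.idxOf_lt_length_of_mem hv
  refine mask_mem_triples ⟨_, hlt hx⟩ ⟨_, hlt hy⟩ ⟨_, hlt hz⟩ ?_ ?_ ?_ <;>
    rw [Ne, Fin.mk.injEq, List.idxOf_inj ‹_›] <;> assumption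

theorem card_filter_decode_notMem_le {𝒻 : Finset (Finset α)} (hL : L.length = 7)
    (hsub : ∀ F ∈ 𝒻, F ⊆ L.toFinset) (h3 : ∀ F ∈ 𝒻, #F = 3) (hcard : 17 ≤ #𝒻) :
    #{u ∈ triples.toFinset | decode L u ∉ 𝒻} ≤ 18 := by
  have himage : 𝒻 ⊆ image (decode L) {u ∈ triples.toFinset | decode L u ∈ 𝒻} := fun F hF => by
    obtain ⟨u, hu, rfl⟩ := exists_mem_triples hL (hsub F hF) (h3 F hF)
    exact mem_image_of_mem _ (mem_filter.2 ⟨List.mem_toFinset.2 hu, hF⟩)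
  have h35 : #triples.toFinset = 35 := by decide +kernel
  have := card_filter_add_card_filter_not (s := triples.toFinset) (decode L · ∈ 𝒻)
  have := (card_le_card himage).trans card_image_le
  omega

theorem mem_triples_and_decode_notMem {𝒻 : Finset (Finset α)} {p : ℕ}
    (hmiss : ∀ F ∈ 𝒻, F ∩ decode L t ≠ decode L p) (hu : (fiber t p).testBit u) :
    u ∈ triples ∧ decode L u ∉ 𝒻 := by
  rw [fiber, testBit_mask, List.mem_filter, beq_iff_eq] at hu
  exact ⟨hu.1, fun h => hmiss _ h (by rw [← decode_land, hu.2])⟩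

theorem exists_labelling {V : Finset α} (hl : l.Nodup) (hlV : ∀ v ∈ l, v ∈ V) :
    ∃ L : List α, l ⊆ L ∧ L.toFinset = V ∧ L.length = #V ∧
      ∀ i : Fin l.length, L.idxOf (l.get i) = i := by
  have hsub : l.toFinset ⊆ V := fun v hv => hlV v (List.mem_toFinset.1 hv)
  refine ⟨l ++ (V \ l.toFinset).toList, by simp, ?_, ?_, fun i => ?_⟩
  · rw [List.toFinset_append, toList_toFinset, union_sdiff_of_subset hsub]
  · rw [List.length_append, length_toList, ← List.toFinset_card_of_nodup hl, add_comm,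
      card_sdiff_add_card_eq_card hsub]
  · rw [List.idxOf_append_of_mem (l.get_mem i), List.get_eq_getElem, hl.idxOf_getElem]

end Decode

section Edge

variable {α : Type*} [DecidableEq α] {𝒻 𝒵 : Finset (Finset α)} {a b c : α}

theorem LinkCover.inter_ne_singleton (h : LinkCover 𝒻 a b c) (he : Edge 𝒵 a b c) :
    ∀ F ∈ 𝒻, F ∩ {a, b, c} ≠ {a} := fun F hF heq => by
  have hmem : ∀ x, x ∈ F ∧ (x = a ∨ x = b ∨ x = c) ↔ x = a := fun x => by
    simpa using Finset.ext_iff.1 heq x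
  rcases h F hF ((hmem a).2 rfl).1 with hb | hc
  exacts [he.ne.1 ((hmem b).1 ⟨hb, by simp⟩).symm, he.ne.2.1 ((hmem c).1 ⟨hc, by simp⟩).symm]

theorem Cover.inter_ne_empty (h : Cover 𝒻 a b c) : ∀ F ∈ 𝒻, F ∩ {a, b, c} ≠ ∅ := by
  intro F hF heq
  rw [← disjoint_iff_inter_eq_empty, disjoint_right] at heq
  grind [Cover]

end Edge

namespace Unshattered

variable {α : Type*} [DecidableEq α] {V : Finset α} {𝒻 𝒵 : Finset (Finset α)} {S : Finset α}

theorem exists_ssubset_forall_inter_ne (h𝒻 : Unshattered V 𝒻) (hS : S ∈ 𝒻) :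
    ∃ T ⊂ S, ∀ F ∈ 𝒻, F ∩ S ≠ T := by
  have hnot := h𝒻.not_shatters S hS
  unfold Finset.Shatters at hnot
  push Not at hnot
  obtain ⟨T, hTS, hT⟩ := hnot
  refine ⟨T, hTS.ssubset_of_ne ?_, fun F hF => inter_comm S F ▸ hT F hF⟩
  rintro rfl
  exact hT T hS (inter_self T)

theorem exists_card_le_one_forall_inter_ne (h𝒻 : Unshattered V 𝒻) (h𝒵𝒻 : 𝒵 ⊆ 𝒻)
    (h𝒵 : PairClosed 𝒵) (hS : S ∈ 𝒵) : ∃ T ⊆ S, #T ≤ 1 ∧ ∀ F ∈ 𝒻, F ∩ S ≠ T := by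
  obtain ⟨a, b, c, rfl, he⟩ := exists_edge_of_mem hS (h𝒻.card_eq S (h𝒵𝒻 hS))
  rcases h𝒻.cover_cases_of_pairClosed h𝒵𝒻 h𝒵 he with h | h | h | h
  · exact ⟨{a}, by simp, by simp, h.inter_ne_singleton he⟩
  · exact ⟨{b}, by simp, by simp, insert_comm a b {c} ▸ h.inter_ne_singleton he.swap_left⟩
  · refine ⟨{c}, by simp, by simp, ?_⟩
    rw [show ({a, b, c} : Finset α) = {c, a, b} by grind]
    exact h.inter_ne_singleton he.rotate.rotate
  · exact ⟨∅, by simp, by simp, h.inter_ne_empty⟩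

end Unshattered

/-- An unshattered family of more than 16 triples on seven vertices, together with a pair-closed
subfamily. -/
structure SevenVertexCounterexample {α : Type*} [DecidableEq α] (V : Finset α)
    (𝒻 𝒵 : Finset (Finset α)) : Prop extends Unshattered V 𝒻 where
  card_vertices : #V = 7
  lt_card : 16 < #𝒻
  subfamily : 𝒵 ⊆ 𝒻
  pairClosed : PairClosed 𝒵

theorem refutes_linkCover :
    refutes [[0, 1, 2], [0, 1, 3], [0, 2, 3]] [([0, 1, 2], [0])] = true := by
  decide +kernel

theorem refutes_tetrahedron :
    refutes [[0, 1, 2], [0, 1, 3], [0, 2, 3], [1, 2, 3]]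
      [([0, 1, 2], []), ([0, 1, 3], []), ([0, 2, 3], []), ([1, 2, 3], [])] = true := by
  decide +kernel

theorem refutes_bent :
    refutes [[0, 1, 2], [0, 1, 3], [0, 2, 3], [1, 2, 4]]
      [([0, 1, 2], []), ([0, 1, 3], []), ([0, 2, 3], []), ([1, 2, 4], [])] = true := by
  decide +kernel

theorem refutes_spread :
    refutes [[0, 1, 2], [0, 1, 3], [0, 2, 4], [1, 2, 5]]
      [([0, 1, 2], []), ([0, 1, 3], []), ([0, 2, 4], []), ([1, 2, 5], [])] = true := by
  decide +kernel

namespace SevenVertexCounterexample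

variable {α : Type*} [DecidableEq α] {V : Finset α} {𝒻 𝒵 : Finset (Finset α)} {L l : List α}
  {a b c x y z : α}

theorem exists_edge (h : SevenVertexCounterexample V 𝒻 𝒵) (he : Edge 𝒵 a b c) :
    ∃ d ≠ c, Edge 𝒵 a b d :=
  h.pairClosed.exists_edge (fun F hF => h.card_eq F (h.subfamily hF)) he

theorem mem_of_edge (h : SevenVertexCounterexample V 𝒻 𝒵) (he : Edge 𝒵 a b c) :
    a ∈ V ∧ b ∈ V ∧ c ∈ V :=
  h.toUnshattered.mem_of_edge (he.mono h.subfamily)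

theorem exists_properTrace (h : SevenVertexCounterexample V 𝒻 𝒵) {t : ℕ} (ht : decode L t ∈ 𝒻) :
    ∃ k ∈ (properTraces t).map (fiber t), ∀ u, k.testBit u → u ∈ triples ∧ decode L u ∉ 𝒻 := by
  obtain ⟨T, hTS, hT⟩ := h.exists_ssubset_forall_inter_ne ht
  obtain ⟨p, hp, rfl⟩ := exists_mem_properTraces hTS
  exact ⟨_, List.mem_map_of_mem hp, fun u hu => mem_triples_and_decode_notMem hT hu⟩

theorem exists_smallTrace (h : SevenVertexCounterexample V 𝒻 𝒵) (hL : L.length = 7) {t : ℕ}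
    (ht : decode L t ∈ 𝒵) :
    ∃ k ∈ (smallTraces t).map (fiber t), ∀ u, k.testBit u → u ∈ triples ∧ decode L u ∉ 𝒻 := by
  obtain ⟨T, hTS, hcard, hT⟩ :=
    h.exists_card_le_one_forall_inter_ne h.subfamily h.pairClosed ht
  obtain ⟨p, hp, rfl⟩ := exists_mem_smallTraces hL hTS hcard
  exact ⟨_, List.mem_map_of_mem hp, fun u hu => mem_triples_and_decode_notMem hT hu⟩

theorem refutes_map_idxOf_eq_false (h : SevenVertexCounterexample V 𝒻 𝒵) (hLV : L.toFinset = V)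
    (hL : L.length = 7) {ins : List (List α)} {outs : List (List α × List α)}
    (hins : ∀ l ∈ ins, l.toFinset ∈ 𝒵)
    (houts : ∀ p ∈ outs, p.1 ⊆ L ∧ p.2 ⊆ L ∧ ∀ F ∈ 𝒻, F ∩ p.1.toFinset ≠ p.2.toFinset) :
    refutes (ins.map (·.map L.idxOf))
      (outs.map fun p => (p.1.map L.idxOf, p.2.map L.idxOf)) = false := by
  have hmem : ∀ t ∈ (ins.map (·.map L.idxOf)).map mask, decode L t ∈ 𝒵 := by
    simp only [List.map_map, List.mem_map, Function.comp_apply]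
    rintro _ ⟨l, hl, rfl⟩
    rw [decode_mask_map_idxOf]
    · exact hins l hl
    · exact fun x hx => List.mem_toFinset.1 <|
        hLV ▸ h.subset _ (h.subfamily (hins l hl)) (List.mem_toFinset.2 hx)
  refine search_eq_false (s := fun u => u ∈ triples → decode L u ∈ 𝒻) (fun out hout hmore => ?_)
    (List.forall_mem_append.2 ⟨?_, ?_⟩) (fun u hu _ => ?_) (fun u hu => ?_)
  · refine (card_filter_decode_notMem_le hL (hLV ▸ h.subset) h.card_eq h.lt_card).not_gt
      (lt_card_of_moreBits hmore fun u hu => ?_)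
    simpa using hout u hu
  · simp only [List.mem_map (f := fun t => (2 ^ t, (smallTraces t).map (fiber t)))]
    rintro _ ⟨t, ht, rfl⟩
    refine ⟨t, rfl, fun _ => ?_⟩
    simpa using h.exists_smallTrace hL (hmem t ht)
  · simp only [List.mem_map, List.mem_filter]
    rintro _ ⟨t, ⟨ht, -⟩, rfl⟩
    exact ⟨t, rfl, fun hs => by simpa using h.exists_properTrace (hs ht)⟩
  · exact h.subfamily (hmem u (testBit_mask.1 hu))
  · obtain ⟨hu, hp⟩ := List.mem_filter.1 (testBit_mask.1 hu)
    simp only [List.any_map, List.any_eq_true, Function.comp_apply, beq_iff_eq] at hp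
    obtain ⟨p, hp, hup⟩ := hp
    obtain ⟨h1, h2, hne⟩ := houts p hp
    refine fun hs => hne _ (hs hu) ?_
    rw [← decode_mask_map_idxOf h1, ← decode_mask_map_idxOf h2, ← hup, decode_land]

theorem refutes_eq_false (h : SevenVertexCounterexample V 𝒻 𝒵) (hl : l.Nodup)
    (hlV : ∀ v ∈ l, v ∈ V) {ins : List (List (Fin l.length))}
    {outs : List (List (Fin l.length) × List (Fin l.length))}
    (hins : ∀ t ∈ ins, (t.map l.get).toFinset ∈ 𝒵)
    (houts : ∀ p ∈ outs, ∀ F ∈ 𝒻, F ∩ (p.1.map l.get).toFinset ≠ (p.2.map l.get).toFinset) :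
    refutes (ins.map (·.map (↑))) (outs.map fun p => (p.1.map (↑), p.2.map (↑))) = false := by
  obtain ⟨L, hlL, hLV, hL, hidx⟩ := exists_labelling hl hlV
  have hmap : ∀ t : List (Fin l.length), (t.map l.get).map L.idxOf = t.map (↑) := fun t => by
    rw [List.map_map]
    exact List.map_congr_left fun i _ => hidx i
  have hsub : ∀ t : List (Fin l.length), t.map l.get ⊆ L :=
    fun t => (List.forall_mem_map.2 fun i _ => hlL (l.get_mem i))
  have := h.refutes_map_idxOf_eq_false hLV (hL.trans h.card_vertices)
    (ins := ins.map (·.map l.get)) (outs := outs.map fun p => (p.1.map l.get, p.2.map l.get))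
    (List.forall_mem_map.2 hins) (List.forall_mem_map.2 fun p hp => ⟨hsub _, hsub _, houts p hp⟩)
  simpa only [List.map_map, Function.comp_def, hmap] using this

theorem not_linkCover (h : SevenVertexCounterexample V 𝒻 𝒵) (he : Edge 𝒵 a b c) :
    ¬ LinkCover 𝒻 a b c := by
  intro hcov
  obtain ⟨x, hxc, hx⟩ := h.exists_edge he
  obtain ⟨c', hcb, hxc'⟩ := h.exists_edge hx.swap_right
  obtain rfl : c' = c := by
    grind [hcov.eq_or_eq (hxc'.mono h.subfamily) (.inl rfl), Edge]
  have := h.mem_of_edge he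
  have := h.mem_of_edge hx
  have := h.refutes_eq_false (l := [a, b, c', x]) (by grind [Edge]) (by grind)
    (ins := [[0, 1, 2], [0, 1, 3], [0, 2, 3]]) (outs := [([0, 1, 2], [0])])
    (by simpa using ⟨he.2, hx.2, hxc'.swap_right.2⟩)
    (by simpa using hcov.inter_ne_singleton he)
  exact absurd refutes_linkCover (by simpa using this)

theorem cover (h : SevenVertexCounterexample V 𝒻 𝒵) (he : Edge 𝒵 a b c) : Cover 𝒻 a b c := by
  rcases h.cover_cases_of_pairClosed h.subfamily h.pairClosed he with hc | hc | hc | hc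
  · exact (h.not_linkCover he hc).elim
  · exact (h.not_linkCover he.swap_left hc).elim
  · exact (h.not_linkCover he.rotate.rotate hc).elim
  · exact hc

theorem not_tetrahedron (h : SevenVertexCounterexample V 𝒻 𝒵) (he : Edge 𝒵 a b c)
    (hx : Edge 𝒵 a b x) (hy : Edge 𝒵 a c x) : ¬ Edge 𝒵 b c x := by
  intro hz
  have := h.mem_of_edge he
  have := h.mem_of_edge hx
  have := h.refutes_eq_false (l := [a, b, c, x]) (by grind [Edge]) (by grind)
    (ins := [[0, 1, 2], [0, 1, 3], [0, 2, 3], [1, 2, 3]])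
    (outs := [([0, 1, 2], []), ([0, 1, 3], []), ([0, 2, 3], []), ([1, 2, 3], [])])
    (by simpa using ⟨he.2, hx.2, hy.2, hz.2⟩)
    (by simpa using ⟨(h.cover he).inter_ne_empty, (h.cover hx).inter_ne_empty,
      (h.cover hy).inter_ne_empty, (h.cover hz).inter_ne_empty⟩)
  exact absurd refutes_tetrahedron (by simpa using this)

theorem not_bent (h : SevenVertexCounterexample V 𝒻 𝒵) (he : Edge 𝒵 a b c) (hx : Edge 𝒵 a b x)
    (hy : Edge 𝒵 a c x) (hza : z ≠ a) (hzx : z ≠ x) : ¬ Edge 𝒵 b c z := by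
  intro hz
  have := h.mem_of_edge he
  have := h.mem_of_edge hx
  have := h.mem_of_edge hz
  have := h.refutes_eq_false (l := [a, b, c, x, z]) (by grind [Edge]) (by grind)
    (ins := [[0, 1, 2], [0, 1, 3], [0, 2, 3], [1, 2, 4]])
    (outs := [([0, 1, 2], []), ([0, 1, 3], []), ([0, 2, 3], []), ([1, 2, 4], [])])
    (by simpa using ⟨he.2, hx.2, hy.2, hz.2⟩)
    (by simpa using ⟨(h.cover he).inter_ne_empty, (h.cover hx).inter_ne_empty,
      (h.cover hy).inter_ne_empty, (h.cover hz).inter_ne_empty⟩)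
  exact absurd refutes_bent (by simpa using this)

theorem not_spread (h : SevenVertexCounterexample V 𝒻 𝒵) (he : Edge 𝒵 a b c) (hx : Edge 𝒵 a b x)
    (hxc : x ≠ c) (hy : Edge 𝒵 a c y) (hyb : y ≠ b) (hyx : y ≠ x) (hza : z ≠ a) (hzx : z ≠ x)
    (hzy : z ≠ y) : ¬ Edge 𝒵 b c z := by
  intro hz
  have := h.mem_of_edge he
  have := h.mem_of_edge hx
  have := h.mem_of_edge hy
  have := h.mem_of_edge hz
  have := h.refutes_eq_false (l := [a, b, c, x, y, z]) (by grind [Edge]) (by grind)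
    (ins := [[0, 1, 2], [0, 1, 3], [0, 2, 4], [1, 2, 5]])
    (outs := [([0, 1, 2], []), ([0, 1, 3], []), ([0, 2, 4], []), ([1, 2, 5], [])])
    (by simpa using ⟨he.2, hx.2, hy.2, hz.2⟩)
    (by simpa using ⟨(h.cover he).inter_ne_empty, (h.cover hx).inter_ne_empty,
      (h.cover hy).inter_ne_empty, (h.cover hz).inter_ne_empty⟩)
  exact absurd refutes_spread (by simpa using this)

theorem eq_empty (h : SevenVertexCounterexample V 𝒻 𝒵) : 𝒵 = ∅ := by
  refine eq_empty_of_forall_notMem fun F hF => ?_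
  obtain ⟨a, b, c, rfl, he⟩ := exists_edge_of_mem hF (h.card_eq F (h.subfamily hF))
  obtain ⟨x, hxc, hx⟩ := h.exists_edge he
  obtain ⟨y, hyb, hy⟩ := h.exists_edge he.swap_right
  obtain ⟨z, hza, hz⟩ := h.exists_edge he.rotate
  by_cases hyx : y = x
  · subst hyx
    by_cases hzy : z = y
    · subst hzy
      exact h.not_tetrahedron he hx hy hz
    · exact h.not_bent he hx hy hza hzy hz
  by_cases hzx : z = x
  · subst hzx
    exact h.not_bent he.swap_left hx.swap_left hz hyb hyx hy
  by_cases hzy : z = y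
  · subst hzy
    exact h.not_bent he.rotate.rotate hy.swap_left hz.swap_left hxc (Ne.symm hyx) hx
  exact h.not_spread he hx hxc hy hyb hyx hza hzx hzy hz

end SevenVertexCounterexample

theorem Unshattered.card_le_of_card_eq_seven {α : Type*} [DecidableEq α] {V : Finset α}
    {𝒻 : Finset (Finset α)} (h𝒻 : Unshattered V 𝒻) (hV : #V = 7) : #𝒻 ≤ 16 := by
  by_contra! hcard
  have hchoose : (#V - 1).choose 2 = 15 := by rw [hV]; rfl
  obtain ⟨𝒵, h𝒵𝒻, hne, h𝒵⟩ := exists_pairClosed h𝒻.subset h𝒻.card_eq (by omega)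
  have h : SevenVertexCounterexample V 𝒻 𝒵 := ⟨h𝒻, hV, hcard, h𝒵𝒻, h𝒵⟩
  exact hne.ne_empty h.eq_empty

/-! ### Minimal counterexamples on at least eight vertices -/

/-- A family of more than `(#V - 1).choose 2 + 1` triples on at least eight vertices that shatters
none of its members, when no such family exists on one vertex less. -/
structure MinimalCounterexample {α : Type*} [DecidableEq α] (V : Finset α)
    (𝒻 : Finset (Finset α)) : Prop extends Unshattered V 𝒻 where
  eight_le : 8 ≤ #V
  lt_card : (#V - 1).choose 2 + 1 < #𝒻
  card_le : ∀ (U : Finset α) 𝒢, #U = #V - 1 → Unshattered U 𝒢 → #𝒢 ≤ (#V - 2).choose 2 + 1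

theorem Unshattered.erase {α : Type*} [DecidableEq α] {V : Finset α} {𝒻 : Finset (Finset α)}
    (h𝒻 : Unshattered V 𝒻) (v : α) : Unshattered (V.erase v) {F ∈ 𝒻 | v ∉ F} where
  subset F hF := subset_erase.2 ⟨h𝒻.subset F (mem_filter.1 hF).1, (mem_filter.1 hF).2⟩
  card_eq F hF := h𝒻.card_eq F (mem_filter.1 hF).1
  not_shatters F hF h := h𝒻.not_shatters F (mem_filter.1 hF).1 (h.mono_left (filter_subset _ _))

namespace MinimalCounterexample

variable {α : Type*} [DecidableEq α] {V : Finset α} {𝒻 : Finset (Finset α)} {p q r v z : α}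

theorem choose_add_card_le (h : MinimalCounterexample V 𝒻) : (#V - 2).choose 2 + #V ≤ #𝒻 := by
  obtain ⟨k, hk⟩ := Nat.exists_eq_add_of_le h.eight_le
  have hpascal : (k + 7).choose 2 = (k + 6).choose 2 + (k + 6) := by
    rw [Nat.choose_succ_succ, Nat.choose_one_right, add_comm]
  have := h.lt_card
  rw [hk, show 8 + k - 1 = k + 7 by omega] at this
  rw [hk, show 8 + k - 2 = k + 6 by omega]
  omega

theorem le_degree (h : MinimalCounterexample V 𝒻) (hv : v ∈ V) :
    #V - 1 ≤ #{F ∈ 𝒻 | v ∈ F} := by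
  have := h.card_le (V.erase v) _ (card_erase_of_mem hv) (h.erase v)
  have := card_filter_add_card_filter_not (s := 𝒻) (v ∈ ·)
  have := h.choose_add_card_le
  omega

theorem card_missing_lt_card_extra (h : MinimalCounterexample V 𝒻) (hz : z ∈ V) (hp : p ∈ V)
    (hzp : z ≠ p) {B : Finset α} (hB : B ⊆ (V.erase z).erase p) {A : Finset (Sym2 α)}
    (hE : ∀ u v, Edge 𝒻 z u v → s(u, v) ∈ A ∨ u = p ∧ v ∉ B ∨ v = p ∧ u ∉ B) : #B < #A := by
  have hsub : {F ∈ 𝒻 | z ∈ F} ⊆ A.image (fun e => insert z e.toFinset) ∪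
      (((V.erase z).erase p) \ B).image fun v => {z, p, v} := by
    intro F hF
    obtain ⟨hF, hzF⟩ := mem_filter.1 hF
    obtain ⟨u, v, rfl, he⟩ := exists_edge_of_mem_of_mem hF (h.card_eq F hF) hzF
    have hV := h.mem_of_edge he
    have hne := he.ne
    rw [mem_union, mem_image, mem_image]
    rcases hE u v he with hA | ⟨rfl, hvB⟩ | ⟨rfl, huB⟩
    · exact .inl ⟨_, hA, by rw [Sym2.toFinset_mk_eq]⟩
    · exact .inr ⟨v, by grind, rfl⟩
    · exact .inr ⟨u, by grind, by rw [pair_comm]⟩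
  have hstar : #((V.erase z).erase p) = #V - 2 := by
    rw [card_erase_of_mem (mem_erase.2 ⟨hzp.symm, hp⟩), card_erase_of_mem hz]; omega
  have hdeg := (card_le_card hsub).trans
    ((card_union_le _ _).trans (add_le_add card_image_le card_image_le))
  rw [card_sdiff_of_subset hB, hstar] at hdeg
  have := h.le_degree hz
  have := card_le_card hB
  have := h.eight_le
  omega

theorem exists_notMem (h : MinimalCounterexample V 𝒻) (l : List α) (hl : l.length ≤ 7) :
    ∃ v ∈ V, v ∉ l := by
  obtain ⟨v, hv, hvl⟩ := exists_mem_notMem_of_card_lt_card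
    ((l.toFinset_card_le.trans hl).trans_lt h.eight_le)
  exact ⟨v, hv, by simpa using hvl⟩

theorem six_lt_card_of_link_subset (h : MinimalCounterexample V 𝒻) (hz : z ∈ V)
    {A : Finset (Sym2 α)} (hE : ∀ u v, Edge 𝒻 z u v → s(u, v) ∈ A) : 6 < #A := by
  obtain ⟨p, hp, hpz⟩ := h.exists_notMem [z] (by simp)
  have hzp : z ≠ p := by simpa [eq_comm] using hpz
  have hlt := h.card_missing_lt_card_extra hz hp hzp subset_rfl fun u v he => .inl (hE u v he)
  rw [card_erase_of_mem (mem_erase.2 ⟨hzp.symm, hp⟩), card_erase_of_mem hz] at hlt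
  have := h.eight_le
  omega

theorem edge_of_star (h : MinimalCounterexample V 𝒻) (hz : z ∈ V) (hp : p ∈ V) (hzp : z ≠ p)
    (hE : ∀ u v, Edge 𝒻 z u v → u = p ∨ v = p ∨ u = q ∧ v = r ∨ u = r ∧ v = q) (hv : v ∈ V)
    (hvz : v ≠ z) (hvp : v ≠ p) : Edge 𝒻 z p v := by
  by_contra hcon
  have := h.card_missing_lt_card_extra hz hp hzp (B := {v}) (A := {s(q, r)}) (by grind)
    fun u w he => by
      simp only [mem_singleton, Sym2.eq_iff]
      grind [Edge.swap_right]
  simp at this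

end MinimalCounterexample

instance {α : Type*} [DecidableEq α] (𝒻 : Finset (Finset α)) (a b c : α) :
    Decidable (Edge 𝒻 a b c) :=
  inferInstanceAs (Decidable (_ ∧ _))

section Shift

variable {α : Type*} [DecidableEq α] {V : Finset α} {𝒻 : Finset (Finset α)} {a b c x : α}

/-- The vertices `x` in `V` such that both `{a, b, x}` and `{a, c, x}` belong to `𝒻`. -/
def commonLink (V : Finset α) (𝒻 : Finset (Finset α)) (a b c : α) : Finset α :=
  {x ∈ V | Edge 𝒻 a b x ∧ Edge 𝒻 a c x}

/-- The family obtained by deleting the vertex `a` and adding the triples `{b, c, x}`, one for each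
`x` joined in `𝒻` to both `{a, b}` and `{a, c}`. -/
def shift (V : Finset α) (𝒻 : Finset (Finset α)) (a b c : α) : Finset (Finset α) :=
  {F ∈ 𝒻 | a ∉ F} ∪ (commonLink V 𝒻 a b c).image fun x => {b, c, x}

theorem mem_commonLink : x ∈ commonLink V 𝒻 a b c ↔ x ∈ V ∧ Edge 𝒻 a b x ∧ Edge 𝒻 a c x :=
  mem_filter

theorem mem_shift {G : Finset α} : G ∈ shift V 𝒻 a b c ↔
    G ∈ 𝒻 ∧ a ∉ G ∨ ∃ x ∈ commonLink V 𝒻 a b c, {b, c, x} = G := by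
  simp only [shift, mem_union, mem_filter, mem_image]

theorem card_shift (hbc : b ≠ c) :
    #(shift V 𝒻 a b c) + #{x ∈ commonLink V 𝒻 a b c | Edge 𝒻 b c x} =
      #{F ∈ 𝒻 | a ∉ F} + #(commonLink V 𝒻 a b c) := by
  have hinj : Set.InjOn (fun x => ({b, c, x} : Finset α)) (commonLink V 𝒻 a b c) := by
    intro x hx y _ hxy
    have hxmem : x ∈ ({b, c, y} : Finset α) := by
      rw [← show ({b, c, x} : Finset α) = {b, c, y} from hxy]; simp
    have := mem_commonLink.1 (mem_coe.1 hx)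
    grind [Edge.ne]
  have hinter : ({F ∈ 𝒻 | a ∉ F} ∩ (commonLink V 𝒻 a b c).image fun x => {b, c, x}) =
      {x ∈ commonLink V 𝒻 a b c | Edge 𝒻 b c x}.image fun x => {b, c, x} := by
    ext F
    simp only [mem_inter, mem_filter, mem_image]
    constructor
    · rintro ⟨hF, x, hx, rfl⟩
      have := mem_commonLink.1 hx
      exact ⟨x, ⟨hx, ⟨by grind [Edge.ne], hF.1⟩⟩, rfl⟩
    · rintro ⟨x, hx, rfl⟩
      have := mem_commonLink.1 hx.1
      exact ⟨⟨hx.2.2, by grind [Edge.ne]⟩, x, hx.1, rfl⟩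
  rw [← card_image_of_injOn (hinj.mono (coe_subset.2 (filter_subset _ _))), ← hinter, shift,
    card_union_add_card_inter, card_image_of_injOn hinj]

theorem Unshattered.degree_add_card_le (h : Unshattered V 𝒻) (habc : Edge 𝒻 a b c)
    (hcov : LinkCover 𝒻 a b c) :
    #{F ∈ 𝒻 | a ∈ F} + #{x ∈ V \ {a, b, c} | ¬ Edge 𝒻 a b x ∧ ¬ Edge 𝒻 a c x} ≤
      #V - 2 + #(commonLink V 𝒻 a b c) := by
  set X : Finset α := {x ∈ V \ {a, b, c} | Edge 𝒻 a b x} with hX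
  set Y : Finset α := {x ∈ V \ {a, b, c} | Edge 𝒻 a c x} with hY
  have hVabc := h.mem_of_edge habc
  have hsub : {F ∈ 𝒻 | a ∈ F} ⊆ {{a, b, c}} ∪ (X.image (fun x => {a, b, x}) ∪
      Y.image fun x => {a, c, x}) := by
    intro F hF
    obtain ⟨hF, haF⟩ := mem_filter.1 hF
    simp only [mem_union, mem_singleton, mem_image]
    rcases hcov F hF haF with hb | hc
    · obtain ⟨u, rfl, he⟩ := exists_edge_of_pair_subset hF (h.card_eq F hF) habc.ne.1 haF hb
      have := h.mem_of_edge he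
      by_cases hu : u = c
      · exact .inl (by rw [hu])
      · exact .inr (.inl ⟨u, by grind [Edge.ne], rfl⟩)
    · obtain ⟨u, rfl, he⟩ := exists_edge_of_pair_subset hF (h.card_eq F hF) habc.ne.2.1 haF hc
      have := h.mem_of_edge he
      by_cases hu : u = b
      · exact .inl (by rw [hu, pair_comm])
      · exact .inr (.inr ⟨u, by grind [Edge.ne], rfl⟩)
  have hdeg : #{F ∈ 𝒻 | a ∈ F} ≤ 1 + (#X + #Y) := (card_le_card hsub).trans <|
    (card_union_le _ _).trans <| add_le_add (card_singleton _).le <|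
      (card_union_le _ _).trans (add_le_add card_image_le card_image_le)
  have hinter : X ∩ Y = commonLink V 𝒻 a b c := by
    ext x
    have := mem_commonLink (V := V) (𝒻 := 𝒻) (a := a) (b := b) (c := c) (x := x)
    grind [Edge.ne]
  have hunion : #(X ∪ Y) + #{x ∈ V \ {a, b, c} | ¬ Edge 𝒻 a b x ∧ ¬ Edge 𝒻 a c x} =
      #V - 3 := by
    rw [hX, hY, ← filter_or]
    simp_rw [← not_or]
    rw [card_filter_add_card_filter_not, card_sdiff_of_subset (by grind), h.card_eq _ habc.2]
  have hVcard : 3 ≤ #V := h.card_eq _ habc.2 ▸ card_le_card (h.subset _ habc.2)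
  have := card_union_add_card_inter X Y
  rw [hinter] at this
  omega

theorem shatters_of_shift_shatters (habc : Edge 𝒻 a b c) {S : Finset α} (hS : S ∈ 𝒻)
    (hS3 : #S = 3) (haS : a ∉ S) (hsh : (shift V 𝒻 a b c).Shatters S) : 𝒻.Shatters S := by
  intro T hT
  obtain ⟨G, hG, rfl⟩ := hsh hT
  obtain ⟨hG, -⟩ | ⟨x, hx, rfl⟩ := mem_shift.1 hG
  · exact ⟨G, hG, rfl⟩
  obtain ⟨-, habx, hacx⟩ := mem_commonLink.1 hx
  have hne : b ≠ c ∧ b ≠ x ∧ c ≠ x := ⟨habc.ne.2.2, habx.ne.2.2, hacx.ne.2.2⟩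
  by_cases hsub : {b, c, x} ⊆ S
  · rw [eq_of_subset_of_card_le hsub (hS3.trans (card_eq_three.2 ⟨b, c, x, by grind⟩).symm).le]
    exact ⟨S, hS, rfl⟩
  by_cases hbS : b ∈ S
  · by_cases hcS : c ∈ S
    · exact ⟨_, habc.2, by grind⟩
    · exact ⟨_, habx.2, by grind⟩
  · exact ⟨_, hacx.2, by grind⟩

end Shift

namespace MinimalCounterexample

variable {α : Type*} [DecidableEq α] {V : Finset α} {𝒻 : Finset (Finset α)} {a b c v x y : α}

theorem linkCover_of_shatters_pair (h : MinimalCounterexample V 𝒻) (habc : Edge 𝒻 a b c)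
    (habx : Edge 𝒻 a b x) (hacx : Edge 𝒻 a c x) (hsh : {F ∈ 𝒻 | a ∉ F}.Shatters {b, x}) :
    LinkCover 𝒻 a b x := by
  have htrace : ∀ T ⊆ ({b, x} : Finset α), ∃ F ∈ 𝒻, a ∉ F ∧ (b ∈ F ↔ b ∈ T) ∧ (x ∈ F ↔ x ∈ T) := by
    intro T hT
    obtain ⟨F, hF, rfl⟩ := hsh hT
    exact ⟨F, (mem_filter.1 hF).1, (mem_filter.1 hF).2, by simp, by simp⟩
  obtain ⟨B, hB, haB, hbB, hxB⟩ := htrace {b} (by simp)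
  obtain ⟨X, hX, haX, hbX, hxX⟩ := htrace {x} (by simp)
  obtain ⟨E, hE, haE, hbE, hxE⟩ := htrace ∅ (by simp)
  obtain ⟨D, hD, haD, hbD, hxD⟩ := htrace {b, x} subset_rfl
  clear htrace
  have hne := habc.ne
  have hnex := habx.ne
  have hnex' := hacx.ne
  obtain ⟨d, rfl, hd⟩ := exists_edge_of_pair_subset hD (h.card_eq D hD) hnex.2.2
    (by simp [hbD]) (by simp [hxD])
  simp only [mem_singleton, notMem_empty, iff_true, iff_false] at hbB hxB hbX hxX hbE hxE
  rcases h.cover_cases habx ⟨c, by grind, habc⟩ ⟨c, by grind, hacx.swap_right⟩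
    ⟨d, by grind, hd⟩ with h1 | h1 | h1 | h1
  · exact h1
  · grind [h1 B hB]
  · grind [h1 X hX]
  · grind [h1 E hE]

theorem not_shatters_of_mem_commonLink (h : MinimalCounterexample V 𝒻) (habc : Edge 𝒻 a b c)
    (hcov : LinkCover 𝒻 a b c) (hx : x ∈ commonLink V 𝒻 a b c) :
    ¬ (shift V 𝒻 a b c).Shatters {b, c, x} := by
  intro hsh
  obtain ⟨-, habx, hacx⟩ := mem_commonLink.1 hx
  have hne := habc.ne
  have hnex := habx.ne
  have hnex' := hacx.ne
  have hbx : {F ∈ 𝒻 | a ∉ F}.Shatters {b, x} := by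
    intro T hT
    obtain ⟨G, hG, hGT⟩ := hsh (hT.trans (insert_subset_insert b (subset_insert c {x})))
    obtain hG | ⟨y, -, rfl⟩ := mem_shift.1 hG
    · exact ⟨G, mem_filter.2 hG, by grind⟩
    · have hcT := hT (hGT ▸ by simp : c ∈ T)
      grind
  have hcx : {F ∈ 𝒻 | a ∉ F}.Shatters {c, x} := by
    intro T hT
    obtain ⟨G, hG, hGT⟩ := hsh (hT.trans (subset_insert b {c, x}))
    obtain hG | ⟨y, -, rfl⟩ := mem_shift.1 hG
    · exact ⟨G, mem_filter.2 hG, by grind⟩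
    · have hbT := hT (hGT ▸ by simp : b ∈ T)
      grind
  have hb := h.linkCover_of_shatters_pair habc habx hacx hbx
  have hc := h.linkCover_of_shatters_pair habc.swap_right hacx habx hcx
  have := h.six_lt_card_of_link_subset (h.mem_of_edge habc).1 (A := {s(b, c), s(b, x), s(c, x)})
    fun u v he => by
      simp only [mem_insert, mem_singleton, Sym2.eq_iff]
      grind [Edge.ne, LinkCover.eq_or_eq]
  have := card_le_three (a := s(b, c)) (b := s(b, x)) (c := s(c, x))
  omega

theorem shift_unshattered (h : MinimalCounterexample V 𝒻) (habc : Edge 𝒻 a b c)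
    (hcov : LinkCover 𝒻 a b c) : Unshattered (V.erase a) (shift V 𝒻 a b c) where
  subset G hG := by
    obtain ⟨hG, haG⟩ | ⟨x, hx, rfl⟩ := mem_shift.1 hG
    · exact subset_erase.2 ⟨h.subset G hG, haG⟩
    · have := mem_commonLink.1 hx
      have := h.mem_of_edge habc
      grind [Edge.ne]
  card_eq G hG := by
    obtain ⟨hG, -⟩ | ⟨x, hx, rfl⟩ := mem_shift.1 hG
    · exact h.card_eq G hG
    · have := mem_commonLink.1 hx
      exact card_eq_three.2 ⟨b, c, x, by grind [Edge.ne]⟩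
  not_shatters G hG hsh := by
    obtain ⟨hG, haG⟩ | ⟨x, hx, rfl⟩ := mem_shift.1 hG
    · exact h.not_shatters G hG (shatters_of_shift_shatters habc hG (h.card_eq G hG) haG hsh)
    · exact h.not_shatters_of_mem_commonLink habc hcov hx hsh

theorem card_unlinked_lt_card_summits (h : MinimalCounterexample V 𝒻) (habc : Edge 𝒻 a b c)
    (hcov : LinkCover 𝒻 a b c) :
    #{x ∈ V \ {a, b, c} | ¬ Edge 𝒻 a b x ∧ ¬ Edge 𝒻 a c x} <
      #{x ∈ commonLink V 𝒻 a b c | Edge 𝒻 b c x} := by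
  have := h.card_le _ _ (card_erase_of_mem (h.mem_of_edge habc).1) (h.shift_unshattered habc hcov)
  have := card_shift (V := V) (𝒻 := 𝒻) (a := a) habc.ne.2.2
  have := h.degree_add_card_le habc hcov
  have := card_filter_add_card_filter_not (s := 𝒻) (a ∈ ·)
  have := h.choose_add_card_le
  have := h.eight_le
  omega

theorem cover_or_linkCover_of_two_summits (h : MinimalCounterexample V 𝒻) (habc : Edge 𝒻 a b c)
    (habx : Edge 𝒻 a b x) (hacx : Edge 𝒻 a c x) (hbcx : Edge 𝒻 b c x) (hacy : Edge 𝒻 a c y)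
    (hbcy : Edge 𝒻 b c y) (hxy : x ≠ y) : Cover 𝒻 a b x ∨ LinkCover 𝒻 x a b := by
  have := habc.ne
  rcases h.cover_cases habx ⟨c, by grind [Edge.ne], habc⟩ ⟨c, by grind, hacx.swap_right⟩
    ⟨c, by grind, hbcx.swap_right⟩ with ha | hb | hx | hcov
  · grind [Edge.ne, LinkCover.eq_or_eq]
  · grind [Edge.ne, LinkCover.eq_or_eq]
  · exact .inr hx
  · exact .inl hcov

theorem edge_of_linkCover_of_linkCover (h : MinimalCounterexample V 𝒻) (habc : Edge 𝒻 a b c)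
    (hcov : LinkCover 𝒻 a b c) (hacx : Edge 𝒻 a c x) (hbx : b ≠ x) (hx : LinkCover 𝒻 x a c)
    (hv : v ∈ V) (hvx : v ≠ x) (hvc : v ≠ c) : Edge 𝒻 x c v := by
  have hne := hacx.ne
  have hV := h.mem_of_edge hacx
  refine h.edge_of_star (q := a) (r := b) hV.2.2 hV.2.1 hne.2.2.symm (fun u w he => ?_) hv hvx hvc
  grind [Edge.ne, LinkCover.eq_or_eq]

theorem not_linkCover_and_linkCover (h : MinimalCounterexample V 𝒻) (habc : Edge 𝒻 a b c)
    (hcov : LinkCover 𝒻 a b c) (habx : Edge 𝒻 a b x) (hacx : Edge 𝒻 a c x)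
    (hx : LinkCover 𝒻 x a b) : ¬ LinkCover 𝒻 x a c := by
  intro hx'
  obtain ⟨v, hvV, hv⟩ := h.exists_notMem [a, b, c, x] (by simp)
  have := h.edge_of_linkCover_of_linkCover habc hcov hacx habx.ne.2.2 hx' hvV
  grind [Edge.ne, LinkCover.eq_or_eq]

theorem not_cover_and_cover_left (h : MinimalCounterexample V 𝒻) (habc : Edge 𝒻 a b c)
    (hcov : LinkCover 𝒻 a b c) (habx : Edge 𝒻 a b x) (hacx : Edge 𝒻 a c x)
    (hacx' : Cover 𝒻 a c x ∨ LinkCover 𝒻 x a c) (haby : Edge 𝒻 a b y) (hcy : c ≠ y)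
    (hxy : x ≠ y) (habx' : Cover 𝒻 a b x) : ¬ Cover 𝒻 a b y := by
  intro haby'
  obtain ⟨z, hzV, hz⟩ := h.exists_notMem [a, b, c, x, y] (by simp)
  simp only [List.mem_cons, List.not_mem_nil, or_false, not_or] at hz
  rcases hacx' with hacx' | hx
  · have := h.six_lt_card_of_link_subset hzV
      (A := {s(a, b), s(a, c), s(x, y), s(b, c), s(b, x)}) fun u v he => by
        simp only [mem_insert, mem_singleton, Sym2.eq_iff]
        grind [Edge.ne, LinkCover.eq_or_eq, Cover.eq_or_eq]
    have := card_le_five (a := s(a, b)) (b := s(a, c)) (c := s(x, y)) (d := s(b, c)) (e := s(b, x))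
    omega
  · have := h.edge_of_linkCover_of_linkCover habc hcov hacx habx.ne.2.2 hx hzV (by grind) (by grind)
    grind [Edge.ne, Cover.eq_or_eq]

theorem not_cover_and_cover_cross (h : MinimalCounterexample V 𝒻) (habc : Edge 𝒻 a b c)
    (hcov : LinkCover 𝒻 a b c) (hcx : c ≠ x) (hby : b ≠ y) (hxy : x ≠ y)
    (habx : Cover 𝒻 a b x) : ¬ Cover 𝒻 a c y := by
  intro hacy
  obtain ⟨z, hzV, hz⟩ := h.exists_notMem [a, b, c, x, y] (by simp)
  simp only [List.mem_cons, List.not_mem_nil, or_false, not_or] at hz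
  have := h.six_lt_card_of_link_subset hzV
    (A := {s(a, b), s(a, c), s(b, c), s(b, y), s(x, c), s(x, y)}) fun u v he => by
      simp only [mem_insert, mem_singleton, Sym2.eq_iff]
      grind [Edge.ne, LinkCover.eq_or_eq, Cover.eq_or_eq]
  have := card_le_six (a := s(a, b)) (b := s(a, c)) (c := s(b, c)) (d := s(b, y)) (e := s(x, c))
    (f := s(x, y))
  omega

theorem eq_of_summits (h : MinimalCounterexample V 𝒻) (habc : Edge 𝒻 a b c)
    (hcov : LinkCover 𝒻 a b c) (habx : Edge 𝒻 a b x) (hacx : Edge 𝒻 a c x) (hbcx : Edge 𝒻 b c x)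
    (haby : Edge 𝒻 a b y) (hacy : Edge 𝒻 a c y) (hbcy : Edge 𝒻 b c y) : x = y := by
  by_contra hxy
  have hbx := h.cover_or_linkCover_of_two_summits habc habx hacx hbcx hacy hbcy hxy
  have hcx := h.cover_or_linkCover_of_two_summits habc.swap_right hacx habx hbcx.swap_left haby
    hbcy.swap_left hxy
  have hby := h.cover_or_linkCover_of_two_summits habc haby hacy hbcy hacx hbcx (Ne.symm hxy)
  have hcy := h.cover_or_linkCover_of_two_summits habc.swap_right hacy haby hbcy.swap_left habx
    hbcx.swap_left (Ne.symm hxy)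
  have hx := h.not_linkCover_and_linkCover habc hcov habx hacx
  have hy := h.not_linkCover_and_linkCover habc hcov haby hacy
  have hb := h.not_cover_and_cover_left habc hcov habx hacx hcx haby hbcy.ne.2.2 hxy
  have hc := h.not_cover_and_cover_left habc.swap_right hcov.swap hacx habx hbx hacy haby.ne.2.2 hxy
  have hbxcy := h.not_cover_and_cover_cross habc hcov hacx.ne.2.2 haby.ne.2.2 hxy
  have hbycx := h.not_cover_and_cover_cross habc hcov hacy.ne.2.2 habx.ne.2.2 (Ne.symm hxy)
  tauto

theorem exists_summit (h : MinimalCounterexample V 𝒻) (habc : Edge 𝒻 a b c)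
    (hcov : LinkCover 𝒻 a b c) : (∃ x, Edge 𝒻 a b x ∧ Edge 𝒻 a c x ∧ Edge 𝒻 b c x) ∧
      ∀ v ∈ V, v ∉ ({a, b, c} : Finset α) → Edge 𝒻 a b v ∨ Edge 𝒻 a c v := by
  have hlt := h.card_unlinked_lt_card_summits habc hcov
  have hle : #{x ∈ commonLink V 𝒻 a b c | Edge 𝒻 b c x} ≤ 1 := by
    refine card_le_one.2 fun x hx y hy => ?_
    simp only [mem_filter, mem_commonLink] at hx hy
    exact h.eq_of_summits habc hcov hx.1.2.1 hx.1.2.2 hx.2 hy.1.2.1 hy.1.2.2 hy.2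
  constructor
  · obtain ⟨x, hx⟩ := card_pos.1 (by omega : 0 < #{x ∈ commonLink V 𝒻 a b c | Edge 𝒻 b c x})
    simp only [mem_filter, mem_commonLink] at hx
    exact ⟨x, hx.1.2.1, hx.1.2.2, hx.2⟩
  · intro v hv hvabc
    have hempty := card_eq_zero.1 (Nat.lt_one_iff.1 (hlt.trans_le hle))
    by_contra! hcon
    exact notMem_empty v (hempty ▸ mem_filter.2 ⟨mem_sdiff.2 ⟨hv, hvabc⟩, hcon⟩)

end MinimalCounterexample

/-- In a minimal counterexample `𝒻`, a tetrahedron `a, b, c, x` all of whose faces belong to `𝒻` and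
such that `{b, c}` covers the link of `a`, together with a pair-closed subfamily `𝒵` that does not
contain `{a, b, c}`. -/
structure Pyramid {α : Type*} [DecidableEq α] (V : Finset α) (𝒻 𝒵 : Finset (Finset α))
    (a b c x : α) : Prop extends MinimalCounterexample V 𝒻 where
  abc : Edge 𝒻 a b c
  abx : Edge 𝒻 a b x
  acx : Edge 𝒻 a c x
  bcx : Edge 𝒻 b c x
  linkCover : LinkCover 𝒻 a b c
  pairClosed : PairClosed 𝒵
  subset_erase : 𝒵 ⊆ 𝒻.erase {a, b, c}

namespace Pyramid

variable {α : Type*} [DecidableEq α] {V : Finset α} {𝒻 𝒵 : Finset (Finset α)}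
  {a b c d e f u v w x y : α}

theorem swap (P : Pyramid V 𝒻 𝒵 a b c x) : Pyramid V 𝒻 𝒵 a c b x where
  __ := P
  abc := P.abc.swap_right
  abx := P.acx
  acx := P.abx
  bcx := P.bcx.swap_left
  linkCover := P.linkCover.swap
  subset_erase := by rw [pair_comm]; exact P.subset_erase

theorem edge_of_edge (P : Pyramid V 𝒻 𝒵 a b c x) (h : Edge 𝒵 d e f) : Edge 𝒻 d e f :=
  h.mono (P.subset_erase.trans (erase_subset _ _))

theorem not_edge (P : Pyramid V 𝒻 𝒵 a b c x) : ¬ Edge 𝒵 a b c := fun h =>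
  (mem_erase.1 (P.subset_erase h.2)).1 rfl

theorem exists_edge (P : Pyramid V 𝒻 𝒵 a b c x) (h : Edge 𝒵 d e f) : ∃ g ≠ f, Edge 𝒵 d e g :=
  P.pairClosed.exists_edge (fun F hF => P.card_eq F (mem_of_mem_erase (P.subset_erase hF))) h

theorem cover_cases_of_edge (P : Pyramid V 𝒻 𝒵 a b c x) (h : Edge 𝒵 d e f) :
    LinkCover 𝒻 d e f ∨ LinkCover 𝒻 e d f ∨ LinkCover 𝒻 f d e ∨ Cover 𝒻 d e f :=
  P.cover_cases_of_pairClosed (P.subset_erase.trans (erase_subset _ _)) P.pairClosed h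

theorem edge_or_edge (P : Pyramid V 𝒻 𝒵 a b c x) (hv : v ∈ V) (hva : v ≠ a) (hvb : v ≠ b)
    (hvc : v ≠ c) : Edge 𝒻 a b v ∨ Edge 𝒻 a c v :=
  (P.exists_summit P.abc P.linkCover).2 v hv (by simp [hva, hvb, hvc])

theorem cover_cases_right (P : Pyramid V 𝒻 𝒵 a b c x) :
    LinkCover 𝒻 a c x ∨ LinkCover 𝒻 c a x ∨ LinkCover 𝒻 x a c ∨ Cover 𝒻 a c x := by
  have := P.abx.ne
  have := P.bcx.ne
  exact P.cover_cases P.acx ⟨b, by grind, P.abc.swap_right⟩ ⟨b, by grind, P.abx.swap_right⟩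
    ⟨b, by grind, P.bcx.rotate⟩

theorem edge_of_linkCover_summit (P : Pyramid V 𝒻 𝒵 a b c x) (hx : LinkCover 𝒻 x a c) (hv : v ∈ V)
    (hvx : v ≠ x) (hvc : v ≠ c) : Edge 𝒻 x c v :=
  P.edge_of_linkCover_of_linkCover P.abc P.linkCover P.acx P.abx.ne.2.2 hx hv hvx hvc

theorem eq_or_eq_of_edge (P : Pyramid V 𝒻 𝒵 a b c x) (h : Edge 𝒵 d e f) :
    d = b ∨ d = c ∨ e = b ∨ e = c ∨ f = b ∨ f = c := by
  by_contra! hcon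
  have hcov := P.linkCover
  have habc := P.abc
  have hdef := P.edge_of_edge h
  have hV := P.mem_of_edge hdef
  have hd := P.edge_or_edge hV.1
  have he := P.edge_or_edge hV.2.1
  have hf := P.edge_or_edge hV.2.2
  rcases P.cover_cases_of_edge h with h1 | h1 | h1 | h1 <;>
    grind [Edge.ne, LinkCover.eq_or_eq, Cover.eq_or_eq]

theorem edge_right_of_edge_left (P : Pyramid V 𝒻 𝒵 a b c x) (h : Edge 𝒵 b u v) (hu : u ≠ c)
    (hv : v ≠ c) : Edge 𝒵 c u v := by
  obtain ⟨w, hw, he⟩ := P.exists_edge h.rotate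
  have := P.eq_or_eq_of_edge he
  obtain rfl : w = c := by grind [Edge.ne]
  exact he.rotate.rotate

theorem exists_edge_left_and_edge_right_of_mem (P : Pyramid V 𝒻 𝒵 a b c x) {F : Finset α}
    (hF : F ∈ 𝒵) (hb : b ∈ F) : ∃ u v, Edge 𝒵 b u v ∧ Edge 𝒵 c u v := by
  have hbase : ∀ {v}, Edge 𝒵 b c v → ∃ u v, Edge 𝒵 b u v ∧ Edge 𝒵 c u v := fun {v} h => by
    obtain ⟨w, hw, he⟩ := P.exists_edge h.swap_right
    exact ⟨v, w, he, P.edge_right_of_edge_left he h.ne.2.2.symm hw⟩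
  obtain ⟨u, v, rfl, h⟩ :=
    exists_edge_of_mem_of_mem hF (P.card_eq F (mem_of_mem_erase (P.subset_erase hF))) hb
  by_cases hu : u = c
  · exact hbase (hu ▸ h)
  by_cases hv : v = c
  · exact hbase (hv ▸ h.swap_right)
  exact ⟨u, v, h, P.edge_right_of_edge_left h hu hv⟩

theorem exists_edge_left_and_edge_right (P : Pyramid V 𝒻 𝒵 a b c x) (h𝒵 : 𝒵.Nonempty) :
    ∃ u v, Edge 𝒵 b u v ∧ Edge 𝒵 c u v := by
  obtain ⟨F, hF⟩ := h𝒵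
  obtain ⟨d, e, f, rfl, h⟩ :=
    exists_edge_of_mem hF (P.card_eq F (mem_of_mem_erase (P.subset_erase hF)))
  by_cases hb : b ∈ ({d, e, f} : Finset α)
  · exact P.exists_edge_left_and_edge_right_of_mem hF hb
  · obtain ⟨u, v, hu, hv⟩ := P.swap.exists_edge_left_and_edge_right_of_mem hF
      (by grind [P.eq_or_eq_of_edge h])
    exact ⟨u, v, hv, hu⟩

theorem cover_of_edge_left (P : Pyramid V 𝒻 𝒵 a b c x) (hb : Edge 𝒵 a b v) (hc : Edge 𝒵 a c v)
    (hvx : v ≠ x) : Cover 𝒻 a b v := by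
  have habx := P.abx.ne
  have hbcx := P.bcx.ne
  have habv := P.edge_of_edge hb
  have hacv := P.edge_of_edge hc
  have hbv := habv.ne
  have hcv := hacv.ne
  rcases P.cover_cases_of_edge hb with ha | hb | hv | hcov
  · grind [ha.eq_or_eq P.acx (.inl rfl)]
  · grind [hb.eq_or_eq P.bcx (.inl rfl)]
  · have := P.edge_of_linkCover_of_linkCover P.abc.swap_right P.linkCover.swap habv hcv.2.2 hv
      (P.mem_of_edge P.abc).2.2 hcv.2.2 P.abc.ne.2.2.symm
    exact absurd (P.eq_of_summits P.abc P.linkCover habv hacv this.rotate P.abx P.acx P.bcx) hvx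
  · exact hcov

theorem not_cover_and_cover (P : Pyramid V 𝒻 𝒵 a b c x) (huv : u ≠ v) (huc : u ≠ c) (hub : u ≠ b)
    (hvc : v ≠ c) (hvb : v ≠ b) (hbu : Cover 𝒻 a b u) (hcu : Cover 𝒻 a c u) (hbv : Cover 𝒻 a b v) :
    ¬ Cover 𝒻 a c v := by
  intro hcv
  obtain ⟨w, hwV, hw⟩ := P.exists_notMem [a, b, c, u, v] (by simp)
  simp only [List.mem_cons, List.not_mem_nil, or_false, not_or] at hw
  have hcov := P.linkCover
  have := P.abc.ne
  have := P.six_lt_card_of_link_subset hwV (A := {s(a, b), s(a, c), s(b, c), s(u, v)})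
    fun p q he => by
      simp only [mem_insert, mem_singleton, Sym2.eq_iff]
      grind [Edge.ne, LinkCover.eq_or_eq, Cover.eq_or_eq]
  have := card_le_four (a := s(a, b)) (b := s(a, c)) (c := s(b, c)) (d := s(u, v))
  omega

theorem linkCover_of_cover (P : Pyramid V 𝒻 𝒵 a b c x) (hbv : Edge 𝒻 a b v) (hcv : Edge 𝒻 a c v)
    (hvx : v ≠ x) (hb : Cover 𝒻 a b v) (hc : Cover 𝒻 a c v) (habx : Edge 𝒵 a b x) :
    LinkCover 𝒻 b a x := by
  obtain ⟨w, hwV, hw⟩ := P.exists_notMem [a, b, c, v, x] (by simp)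
  simp only [List.mem_cons, List.not_mem_nil, or_false, not_or] at hw
  have hcov := P.linkCover
  have := P.bcx.ne
  have := P.abx.ne
  have := hbv.ne
  have := hcv.ne
  rcases P.cover_cases_of_edge habx with h1 | h1 | h1 | h1
  · grind [LinkCover.eq_or_eq]
  · exact h1
  · have := P.swap.edge_of_linkCover_summit h1 hwV (by grind) (by grind)
    grind [Cover.eq_or_eq]
  · have := P.six_lt_card_of_link_subset hwV
      (A := {s(a, b), s(a, c), s(b, c), s(b, v), s(x, v)}) fun p q he => by
        simp only [mem_insert, mem_singleton, Sym2.eq_iff]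
        grind [Edge.ne, LinkCover.eq_or_eq, Cover.eq_or_eq]
    have := card_le_five (a := s(a, b)) (b := s(a, c)) (c := s(b, c)) (d := s(b, v)) (e := s(x, v))
    omega

theorem not_cover_of_linkCover (P : Pyramid V 𝒻 𝒵 a b c x) (hv : v ∈ V) (hva : v ≠ a)
    (hvb : v ≠ b) (hvc : v ≠ c) (hvx : v ≠ x) (hb : LinkCover 𝒻 b a x) (hc : LinkCover 𝒻 c a x)
    (hbv : Cover 𝒻 a b v) : ¬ Cover 𝒻 a c v := by
  intro hcv
  obtain ⟨w, hwV, hw⟩ := P.exists_notMem [a, b, c, v, x] (by simp)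
  simp only [List.mem_cons, List.not_mem_nil, or_false, not_or] at hw
  have hcov := P.linkCover
  have hne := P.abc.ne
  have hV := P.mem_of_edge P.abc
  have := P.bcx.ne
  have hlt := P.card_missing_lt_card_extra hwV hv hw.2.2.2.1 (B := {a, b, c})
    (A := {s(a, b), s(a, c)}) (by grind) fun p q he => by
      simp only [mem_insert, mem_singleton, Sym2.eq_iff]
      grind [Edge.ne, LinkCover.eq_or_eq, Cover.eq_or_eq]
  have := card_le_two (a := s(a, b)) (b := s(a, c))
  rw [P.card_eq _ P.abc.2] at hlt
  omega

theorem not_edge_apex_of_ne (P : Pyramid V 𝒻 𝒵 a b c x) (hb : Edge 𝒵 a b v) (hvx : v ≠ x) :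
    ¬ Edge 𝒵 a c v := by
  intro hc
  have hne := P.abc.ne
  have hbv := P.edge_of_edge hb
  have hcv := P.edge_of_edge hc
  have hbcov := P.cover_of_edge_left hb hc hvx
  have hccov := P.swap.cover_of_edge_left hc hb hvx
  obtain ⟨u, huv, hbu⟩ := P.exists_edge hb
  have huc : u ≠ c := by rintro rfl; exact P.not_edge hbu
  have hcu := (P.edge_right_of_edge_left hbu.swap_left hne.2.1 huc).swap_left
  by_cases hux : u = x
  · subst hux
    exact P.not_cover_of_linkCover (P.mem_of_edge hbv).2.2 hbv.ne.2.1.symm hbv.ne.2.2.symm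
      hcv.ne.2.2.symm hvx (P.linkCover_of_cover hbv hcv hvx hbcov hccov hbu)
      (P.swap.linkCover_of_cover hcv hbv hvx hccov hbcov hcu) hbcov hccov
  · exact P.not_cover_and_cover huv huc hbu.ne.2.2.symm hcv.ne.2.2.symm hbv.ne.2.2.symm
      (P.cover_of_edge_left hbu hcu hux) (P.swap.cover_of_edge_left hcu hbu hux) hbcov hccov

theorem not_edge_apex (P : Pyramid V 𝒻 𝒵 a b c x) (hb : Edge 𝒵 a b v) : ¬ Edge 𝒵 a c v := by
  intro hc
  by_cases hvx : v = x
  · obtain ⟨u, huv, hbu⟩ := P.exists_edge hb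
    have huc : u ≠ c := by rintro rfl; exact P.not_edge hbu
    exact P.not_edge_apex_of_ne hbu (hvx ▸ huv)
      (P.edge_right_of_edge_left hbu.swap_left P.abc.ne.2.1 huc).swap_left
  · exact P.not_edge_apex_of_ne hb hvx hc

theorem not_cover_and_cover_base (P : Pyramid V 𝒻 𝒵 a b c x) (hb : Edge 𝒻 b u v)
    (hc : Edge 𝒻 c u v) (hua : u ≠ a) (hva : v ≠ a) (hbuv : Cover 𝒻 b u v) : ¬ Cover 𝒻 c u v := by
  intro hcuv
  obtain ⟨w, hwV, hw⟩ := P.exists_notMem [a, b, c, u, v] (by simp)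
  simp only [List.mem_cons, List.not_mem_nil, or_false, not_or] at hw
  have := P.abc.ne
  have := hb.ne
  have := hc.ne
  have := P.edge_or_edge hwV
  grind [Cover.eq_or_eq]

theorem not_linkCover_and_linkCover_base (P : Pyramid V 𝒻 𝒵 a b c x) (hb : Edge 𝒻 b u v)
    (hc : Edge 𝒻 c u v) (hua : u ≠ a) (hva : v ≠ a) (hbu : LinkCover 𝒻 u b v) :
    ¬ LinkCover 𝒻 u c v := by
  intro hcu
  have hcov := P.linkCover
  have hbc := P.abc.ne
  have hb' := hb.ne
  have hc' := hc.ne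
  have hV := P.mem_of_edge hb
  have := P.edge_of_star (q := b) (r := c) hV.2.1 hV.2.2 hb'.2.2
    (fun p q he => by grind [Edge.ne, LinkCover.eq_or_eq]) (P.mem_of_edge P.abc).1 hua.symm hva.symm
  grind [LinkCover.eq_or_eq]

theorem edge_left_of_cover (P : Pyramid V 𝒻 𝒵 a b c x) (hc : Edge 𝒻 c u v) (hua : u ≠ a)
    (hva : v ≠ a) (hcov : Cover 𝒻 b u v) (hw : w ∈ V) (hw' : w ∉ [a, b, c, u, v]) :
    Edge 𝒻 a b w ∧ ¬ Edge 𝒻 a c w := by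
  simp only [List.mem_cons, List.not_mem_nil, or_false, not_or] at hw'
  have hne := P.abc.ne
  have hc' := hc.ne
  have := P.edge_or_edge hw
  grind [Cover.eq_or_eq]

theorem edge_apex_of_linkCover (P : Pyramid V 𝒻 𝒵 a b c x) (hc : Edge 𝒻 c u v) (hua : u ≠ a)
    (hva : v ≠ a) (hub : u ≠ b) (hvb : v ≠ b) (hcv : LinkCover 𝒻 v c u) : Edge 𝒻 v c a := by
  have hne := P.abc.ne
  have hc' := hc.ne
  have hcov := P.linkCover
  have := (P.exists_summit hc.rotate.rotate hcv).2 a (P.mem_of_edge P.abc).1 (by grind)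
  grind [LinkCover.eq_or_eq]

theorem ne_summit_of_linkCover (P : Pyramid V 𝒻 𝒵 a b c x) (hb : Edge 𝒻 b u v)
    (hc : Edge 𝒻 c u v) (hua : u ≠ a) (hcv : LinkCover 𝒻 v c u) : v ≠ x := by
  have habx := P.abx
  have hne := P.abc.ne
  have := habx.ne
  have hb' := hb.ne
  have hc' := hc.ne
  grind [LinkCover.eq_or_eq]

theorem eq_summit_of_cover_of_linkCover (P : Pyramid V 𝒻 𝒵 a b c x) (hb : Edge 𝒻 b u v)
    (hc : Edge 𝒻 c u v) (hua : u ≠ a) (hva : v ≠ a) (hbuv : Cover 𝒻 b u v)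
    (hcv : LinkCover 𝒻 v c u) : u = x := by
  have hne := P.abc.ne
  have habx := P.abx.ne
  have hacx := P.acx.ne
  have := hb.ne
  have hc' := hc.ne
  have hvx := P.ne_summit_of_linkCover hb hc hua hcv
  by_contra hux
  obtain ⟨w, hwV, hw⟩ := P.exists_notMem [a, b, c, u, v, x] (by simp)
  simp only [List.mem_cons, List.not_mem_nil, or_false, not_or] at hw
  have hacw := P.edge_left_of_cover hc hua hva hbuv hwV (by simp [hw])
  rcases P.cover_cases_right with h1 | h1 | h1 | h1
  · grind [LinkCover.eq_or_eq]
  · grind [LinkCover.eq_or_eq]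
  · have := P.edge_of_linkCover_summit h1 hwV (by grind) (by grind)
    grind [Cover.eq_or_eq]
  · grind [Cover.eq_or_eq]

theorem not_linkCover_and_linkCover_cross (P : Pyramid V 𝒻 𝒵 a b c x) (hb : Edge 𝒻 b u v)
    (hc : Edge 𝒻 c u v) (hua : u ≠ a) (hva : v ≠ a) (hbu : LinkCover 𝒻 u b v) :
    ¬ LinkCover 𝒻 v c u := by
  intro hcv
  have hne := P.abc.ne
  have habx := P.abx.ne
  have hacx := P.acx.ne
  have hb' := hb.ne
  have hc' := hc.ne
  have hux := P.swap.ne_summit_of_linkCover hc.swap_right hb.swap_right hva hbu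
  have hvx := P.ne_summit_of_linkCover hb hc hua hcv
  have huba := P.swap.edge_apex_of_linkCover hb.swap_right hva hua (by grind) (by grind) hbu
  rcases P.cover_cases_right with h1 | h1 | h1 | h1
  · grind [LinkCover.eq_or_eq]
  · grind [LinkCover.eq_or_eq]
  · have := P.edge_of_linkCover_summit h1 (P.mem_of_edge hb).2.1 hux (by grind)
    grind [LinkCover.eq_or_eq]
  · grind [Cover.eq_or_eq]

theorem not_linkCover_of_linkCover_right (P : Pyramid V 𝒻 𝒵 a b c x) (hc : Edge 𝒻 c x v)
    (hva : v ≠ a) (hcv : LinkCover 𝒻 v c x) (hvb : v ≠ b) : ¬ LinkCover 𝒻 c a x := by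
  intro hcov
  have hacov := P.linkCover
  have hne := P.bcx.ne
  have hc' := hc.ne
  have hac := P.acx.ne
  have hab := P.abc.ne
  have hV := P.mem_of_edge hc
  have := P.edge_of_star (q := c) (r := a) hV.2.2 hV.2.1 hc'.2.2.symm
    (fun p q he => by grind [Edge.ne, LinkCover.eq_or_eq]) (P.mem_of_edge P.abc).1 hva.symm hac.2.1
  grind [LinkCover.eq_or_eq]

theorem link_of_cover_of_cover (P : Pyramid V 𝒻 𝒵 a b c x) (hc : Edge 𝒻 c x v) (hva : v ≠ a)
    (hbxv : Cover 𝒻 b x v) (hacx : Cover 𝒻 a c x) (hw : w ∉ [a, b, c, x, v])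
    (hacw : ¬ Edge 𝒻 a c w) {p q : α} (he : Edge 𝒻 w p q) :
    s(p, q) = s(a, b) ∨ s(p, q) = s(b, c) ∨ s(p, q) = s(c, v) ∨
      p = x ∧ q ≠ a ∨ q = x ∧ p ≠ a := by
  simp only [List.mem_cons, List.not_mem_nil, or_false, not_or] at hw
  have hacov := P.linkCover
  have hne := P.bcx.ne
  have hc' := hc.ne
  have hac := P.acx.ne
  have hab := P.abc.ne
  have := he.ne
  have : Edge 𝒻 w a c ↔ Edge 𝒻 a c w := ⟨Edge.rotate, fun h => h.rotate.rotate⟩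
  have : Edge 𝒻 w c a ↔ Edge 𝒻 w a c := ⟨Edge.swap_right, Edge.swap_right⟩
  simp only [Sym2.eq_iff]
  grind [LinkCover.eq_or_eq, Cover.eq_or_eq]

theorem edge_summit_of_not_edge (P : Pyramid V 𝒻 𝒵 a b c x) (hc : Edge 𝒻 c x v) (hva : v ≠ a)
    (hbxv : Cover 𝒻 b x v) (hacx : Cover 𝒻 a c x) (hwV : w ∈ V) (hw : w ∉ [a, b, c, x, v])
    (hacw : ¬ Edge 𝒻 a c w) (hbcw : ¬ Edge 𝒻 b c w) (hyV : y ∈ V) (hyw : y ≠ w) (hyx : y ≠ x)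
    (hya : y ≠ a) : Edge 𝒻 w x y := by
  have hlink := fun {p q} => P.link_of_cover_of_cover (p := p) (q := q) hc hva hbxv hacx hw hacw
  simp only [List.mem_cons, List.not_mem_nil, or_false, not_or] at hw
  have hVa := (P.mem_of_edge P.abc).1
  have := P.acx.ne
  by_contra hcon
  have := P.card_missing_lt_card_extra hwV (P.mem_of_edge hc).2.1 hw.2.2.2.1 (B := {a, y})
    (A := {s(a, b), s(c, v)}) (by grind) fun p q he => by
      have := hlink he
      have := ne_of_edge_of_not_edge hbcw he
      have : Edge 𝒻 w y x → Edge 𝒻 w x y := Edge.swap_right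
      simp only [mem_insert, mem_singleton]
      grind
  have := card_le_two (a := s(a, b)) (b := s(c, v))
  rw [card_pair hya.symm] at *
  omega

theorem edge_right_of_not_edge (P : Pyramid V 𝒻 𝒵 a b c x) (hc : Edge 𝒻 c x v) (hva : v ≠ a)
    (hbxv : Cover 𝒻 b x v) (hacx : Cover 𝒻 a c x) (hwV : w ∈ V) (hw : w ∉ [a, b, c, x, v])
    (hacw : ¬ Edge 𝒻 a c w) (hbcw : ¬ Edge 𝒻 b c w) : Edge 𝒻 w c v := by
  have hlink := fun {p q} => P.link_of_cover_of_cover (p := p) (q := q) hc hva hbxv hacx hw hacw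
  simp only [List.mem_cons, List.not_mem_nil, or_false, not_or] at hw
  have hVa := (P.mem_of_edge P.abc).1
  have := P.acx.ne
  by_contra hcon
  have := P.card_missing_lt_card_extra hwV (P.mem_of_edge hc).2.1 hw.2.2.2.1 (B := {a})
    (A := {s(a, b)}) (by grind) fun p q he => by
      have := hlink he
      have := ne_of_edge_of_not_edge hbcw he
      have : s(p, q) ≠ s(c, v) := by
        intro hpq
        rcases Sym2.eq_iff.1 hpq with ⟨rfl, rfl⟩ | ⟨rfl, rfl⟩
        exacts [hcon he, hcon he.swap_right]
      simp only [mem_singleton]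
      grind
  simp at this

theorem edge_right_summit_of_not_edge (P : Pyramid V 𝒻 𝒵 a b c x) (hc : Edge 𝒻 c x v)
    (hva : v ≠ a) (hbxv : Cover 𝒻 b x v) (hacx : Cover 𝒻 a c x) (hwV : w ∈ V)
    (hw : w ∉ [a, b, c, x, v]) (hacw : ¬ Edge 𝒻 a c w) (hbcw : ¬ Edge 𝒻 b c w) :
    Edge 𝒻 c v w ∧ Edge 𝒻 c x w ∧ Edge 𝒻 v x w := by
  have hsummit := fun {y} =>
    P.edge_summit_of_not_edge (y := y) hc hva hbxv hacx hwV hw hacw hbcw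
  have hwcv := P.edge_right_of_not_edge hc hva hbxv hacx hwV hw hacw hbcw
  simp only [List.mem_cons, List.not_mem_nil, or_false, not_or] at hw
  have hV := P.mem_of_edge hc
  have := hc.ne
  have := P.acx.ne
  have hwxc := hsummit hV.1 (by grind) (by grind) (by grind)
  have hwxv := hsummit hV.2.2 (by grind) (by grind) (by grind)
  exact ⟨hwcv.rotate, hwxc.rotate.swap_left, hwxv.rotate.swap_left⟩

theorem exists_edge_right_of_cover (P : Pyramid V 𝒻 𝒵 a b c x) (hc : Edge 𝒻 c x v) (hva : v ≠ a)
    (hbxv : Cover 𝒻 b x v) (hacx : Cover 𝒻 a c x) (hwV : w ∈ V) (hw : w ∉ [a, b, c, x, v])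
    (hacw : ¬ Edge 𝒻 a c w) : ∃ d ≠ b, Edge 𝒻 c w d := by
  have hlink := fun {p q} => P.link_of_cover_of_cover (p := p) (q := q) hc hva hbxv hacx hw hacw
  simp only [List.mem_cons, List.not_mem_nil, or_false, not_or] at hw
  have hac := P.acx.ne
  have := hc.ne
  have hVx := P.mem_of_edge P.acx
  by_contra! hcon
  have hwc : ∀ {y}, Edge 𝒻 w c y → y = b := fun h => by
    by_contra hyb
    exact hcon _ hyb h.swap_left
  have := P.card_missing_lt_card_extra hwV hVx.2.2 hw.2.2.2.1 (B := {a, c})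
    (A := {s(a, b), s(b, c)}) (by grind) fun p q he => by
      have := hlink he
      have := he.swap_right
      simp only [mem_insert, mem_singleton, Sym2.eq_iff] at *
      grind
  have := card_le_two (a := s(a, b)) (b := s(b, c))
  rw [card_pair hac.1] at *
  omega

theorem not_edge_base_of_cover (P : Pyramid V 𝒻 𝒵 a b c x) (hc : Edge 𝒻 c x v) (hva : v ≠ a)
    (hbxv : Cover 𝒻 b x v) (hacx : Cover 𝒻 a c x) (hwV : w ∈ V)
    (hw : w ∉ [a, b, c, x, v]) : ¬ Edge 𝒻 b c w := by
  intro hbcw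
  have hxa := P.abx.ne.2.1.symm
  obtain ⟨habw, hacw⟩ := P.edge_left_of_cover hc hxa hva hbxv hwV hw
  obtain ⟨y, hyV, hy⟩ := P.exists_notMem [a, b, c, x, v, w] (by simp)
  have hy' : y ∉ [a, b, c, x, v] := fun h => hy (List.mem_append_left [w] h)
  have hacy := (P.edge_left_of_cover hc hxa hva hbxv hyV hy').2
  have hwlink := fun {p q} => P.link_of_cover_of_cover (p := p) (q := q) hc hva hbxv hacx hw hacw
  have hylink := fun {p q} => P.link_of_cover_of_cover (p := p) (q := q) hc hva hbxv hacx hy' hacy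
  have hcw := P.exists_edge_right_of_cover hc hva hbxv hacx hwV hw hacw
  simp only [List.mem_cons, List.not_mem_nil, or_false, not_or] at hw hy
  have habc := P.abc.ne
  have hbcx := P.bcx.ne
  have := hc.ne
  rcases P.cover_cases hbcw ⟨a, by grind, P.abc.rotate⟩ ⟨a, by grind, habw.rotate⟩ hcw
    with h1 | h1 | h1 | h1
  · have := h1.eq_or_eq P.abx
    grind
  · have := h1.eq_or_eq P.acx
    grind
  · have := P.six_lt_card_of_link_subset hwV
      (A := {s(a, b), s(b, c), s(c, v), s(x, b), s(x, c)}) fun p q he => by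
        have := hwlink he
        have := h1.eq_or_eq he
        simp only [mem_insert, mem_singleton, Sym2.eq_iff] at *
        grind [he.ne]
    have := card_le_five (a := s(a, b)) (b := s(b, c)) (c := s(c, v)) (d := s(x, b)) (e := s(x, c))
    omega
  · have := P.six_lt_card_of_link_subset hyV
      (A := {s(a, b), s(b, c), s(c, v), s(x, b), s(x, c), s(x, w)}) fun p q he => by
        have := hylink he
        have := h1.eq_or_eq he
        simp only [mem_insert, mem_singleton, Sym2.eq_iff] at *
        grind [he.ne]
    have := card_le_six (a := s(a, b)) (b := s(b, c)) (c := s(c, v)) (d := s(x, b)) (e := s(x, c))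
      (f := s(x, w))
    omega

theorem not_cover_right_of_cover (P : Pyramid V 𝒻 𝒵 a b c x) (hb : Edge 𝒻 b x v)
    (hc : Edge 𝒻 c x v) (hva : v ≠ a) (hbxv : Cover 𝒻 b x v) (hcva : Edge 𝒻 v c a) :
    ¬ Cover 𝒻 a c x := by
  intro hacx
  obtain ⟨w, hwV, hw⟩ := P.exists_notMem [a, b, c, x, v] (by simp)
  obtain ⟨habw, hacw⟩ := P.edge_left_of_cover hc P.abx.ne.2.1.symm hva hbxv hwV hw
  have hbcw := P.not_edge_base_of_cover hc hva hbxv hacx hwV hw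
  obtain ⟨hcvw, hcxw, hvxw⟩ := P.edge_right_summit_of_not_edge hc hva hbxv hacx hwV hw hacw hbcw
  simp only [List.mem_cons, List.not_mem_nil, or_false, not_or] at hw
  have := P.abx.ne
  have := P.abc.ne
  have := hc.ne
  have := hb.ne
  rcases P.cover_cases hcvw ⟨a, by grind, hcva.swap_left⟩ ⟨x, by grind, hcxw.swap_right⟩
    ⟨x, by grind, hvxw.swap_right⟩ with h1 | h1 | h1 | h1
  · have := h1.eq_or_eq P.abc
    grind
  · have := h1.eq_or_eq hb
    grind
  · have := h1.eq_or_eq habw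
    grind
  · have := h1.eq_or_eq P.abx
    grind

theorem not_linkCover_of_cover_base (P : Pyramid V 𝒻 𝒵 a b c x) (hb : Edge 𝒻 b u v)
    (hc : Edge 𝒻 c u v) (hua : u ≠ a) (hva : v ≠ a) (hbuv : Cover 𝒻 b u v) :
    ¬ LinkCover 𝒻 v c u := by
  intro hcv
  obtain rfl := P.eq_summit_of_cover_of_linkCover hb hc hua hva hbuv hcv
  have hvb := hb.ne.2.1.symm
  obtain ⟨w, hwV, hw⟩ := P.exists_notMem [a, b, c, u, v] (by simp)
  have habw := (P.edge_left_of_cover hc hua hva hbuv hwV hw).1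
  have hcva := P.edge_apex_of_linkCover hc hua hva hb.ne.1.symm hvb hcv
  simp only [List.mem_cons, List.not_mem_nil, or_false, not_or] at hw
  have := P.abc.ne
  have := P.abx.ne
  have := hc.ne
  rcases P.cover_cases_right with h1 | h1 | h1 | h1
  · have := h1.eq_or_eq habw
    grind
  · exact P.not_linkCover_of_linkCover_right hc hva hcv hvb h1
  · have := h1.eq_or_eq hb
    grind
  · exact P.not_cover_right_of_cover hb hc hva hbuv hcva h1

theorem not_edge_base (P : Pyramid V 𝒻 𝒵 a b c x) (hb : Edge 𝒵 b u v) (hua : u ≠ a)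
    (hva : v ≠ a) : ¬ Edge 𝒵 c u v := by
  intro hc
  have hfb := P.edge_of_edge hb
  have hfc := P.edge_of_edge hc
  have := P.abc.ne
  have := hfb.ne
  have := hfc.ne
  have hbcov : ¬ LinkCover 𝒻 b u v := fun h => by
    have := h.eq_or_eq P.abc
    grind
  have hccov : ¬ LinkCover 𝒻 c u v := fun h => by
    have := h.eq_or_eq P.abc
    grind
  rcases (P.cover_cases_of_edge hb).resolve_left hbcov with h1 | h1 | h1 <;>
    rcases (P.cover_cases_of_edge hc).resolve_left hccov with h2 | h2 | h2
  · exact P.not_linkCover_and_linkCover_base hfb hfc hua hva h1 h2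
  · exact P.not_linkCover_and_linkCover_cross hfb hfc hua hva h1 h2
  · exact P.swap.not_linkCover_of_cover_base hfc.swap_right hfb.swap_right hva hua h2.swap_right h1
  · exact P.not_linkCover_and_linkCover_cross hfb.swap_right hfc.swap_right hva hua h1 h2
  · exact P.not_linkCover_and_linkCover_base hfb.swap_right hfc.swap_right hva hua h1 h2
  · exact P.swap.not_linkCover_of_cover_base hfc hfb hua hva h2 h1
  · exact P.not_linkCover_of_cover_base hfb.swap_right hfc.swap_right hva hua h1.swap_right h2
  · exact P.not_linkCover_of_cover_base hfb hfc hua hva h1 h2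
  · exact P.not_cover_and_cover_base hfb hfc hua hva h1 h2

theorem eq_empty (P : Pyramid V 𝒻 𝒵 a b c x) : 𝒵 = ∅ := by
  by_contra! h𝒵
  obtain ⟨u, v, hb, hc⟩ := P.exists_edge_left_and_edge_right h𝒵
  by_cases hua : u = a
  · subst hua
    exact P.not_edge_apex hb.swap_left hc.swap_left
  by_cases hva : v = a
  · subst hva
    exact P.not_edge_apex hb.rotate.rotate hc.rotate.rotate
  exact P.not_edge_base hb hua hva hc

end Pyramid

namespace MinimalCounterexample

variable {α : Type*} [DecidableEq α] {V : Finset α} {𝒻 : Finset (Finset α)} {a b c : α}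

theorem not_linkCover (h : MinimalCounterexample V 𝒻) (habc : Edge 𝒻 a b c) :
    ¬ LinkCover 𝒻 a b c := by
  intro hcov
  obtain ⟨x, habx, hacx, hbcx⟩ := (h.exists_summit habc hcov).1
  have hlt : (#V - 1).choose 2 < #(𝒻.erase {a, b, c}) := by
    have := h.lt_card
    rw [card_erase_of_mem habc.2]
    omega
  obtain ⟨𝒵, hsub, hne, hclosed⟩ := exists_pairClosed
    (fun F hF => h.subset F (mem_of_mem_erase hF)) (fun F hF => h.card_eq F (mem_of_mem_erase hF))
    hlt
  have P : Pyramid V 𝒻 𝒵 a b c x := ⟨h, habc, habx, hacx, hbcx, hcov, hclosed, hsub⟩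
  exact hne.ne_empty P.eq_empty

protected theorem false (h : MinimalCounterexample V 𝒻) : False := by
  obtain ⟨𝒵, hsub, ⟨F, hF⟩, hclosed⟩ := exists_pairClosed h.subset h.card_eq
    ((Nat.lt_succ_self _).trans h.lt_card)
  have h3 : ∀ F ∈ 𝒵, #F = 3 := fun F hF => h.card_eq F (hsub hF)
  have hcover : ∀ {x y z}, Edge 𝒵 x y z → Cover 𝒻 x y z := fun he => by
    have hxyz := he.mono hsub
    rcases h.cover_cases_of_pairClosed hsub hclosed he with h1 | h1 | h1 | h1
    exacts [absurd h1 (h.not_linkCover hxyz), absurd h1 (h.not_linkCover hxyz.swap_left),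
      absurd h1 (h.not_linkCover hxyz.rotate.rotate), h1]
  obtain ⟨a, b, c, -, habc⟩ := exists_edge_of_mem hF (h3 F hF)
  obtain ⟨d, hdc, habd⟩ := hclosed.exists_edge h3 habc
  obtain ⟨e, heb, hace⟩ := hclosed.exists_edge h3 habc.swap_right
  obtain ⟨f, hfa, hbcf⟩ := hclosed.exists_edge h3 habc.rotate
  obtain ⟨w, hwV, hw⟩ := h.exists_notMem [a, b, c, d, e, f] (by simp)
  simp only [List.mem_cons, List.not_mem_nil, or_false, not_or] at hw
  have := habc.ne
  have hlt := h.six_lt_card_of_link_subset hwV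
    (A := {s(a, b), s(a, c), s(a, f), s(b, c), s(b, e), s(c, d)}) fun p q he => by
      have := (hcover habc).eq_or_eq he
      have := (hcover habd).eq_or_eq he
      have := (hcover hace).eq_or_eq he
      have := (hcover hbcf).eq_or_eq he
      have := he.ne
      simp only [mem_insert, mem_singleton, Sym2.eq_iff]
      grind
  have := card_le_six (a := s(a, b)) (b := s(a, c)) (c := s(a, f)) (d := s(b, c)) (e := s(b, e))
    (f := s(c, d))
  omega

end MinimalCounterexample

theorem Unshattered.card_le {α : Type*} [DecidableEq α] {V : Finset α} {𝒻 : Finset (Finset α)}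
    (h𝒻 : Unshattered V 𝒻) (hV : 7 ≤ #V) : #𝒻 ≤ (#V - 1).choose 2 + 1 := by
  obtain ⟨n, hn⟩ : ∃ n, #V = n := ⟨_, rfl⟩
  rw [hn] at hV ⊢
  induction n, hV using Nat.le_induction generalizing V 𝒻 with
  | base => exact h𝒻.card_le_of_card_eq_seven hn
  | succ n hn7 ih =>
    by_contra! hlt
    refine MinimalCounterexample.false (V := V) (𝒻 := 𝒻)
      { h𝒻 with eight_le := by omega, lt_card := by rwa [hn], card_le := fun U 𝒢 hU h𝒢 => ?_ }
    have := ih h𝒢 (by omega)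
    rwa [show #V - 2 = n - 1 by omega]

theorem stmt_0_general {α : Type*} [DecidableEq α] {V : Finset α} (hV : 7 ≤ #V)
    {𝒻 : Finset (Finset α)} (hsub : ∀ F ∈ 𝒻, F ⊆ V) (hcard : ∀ F ∈ 𝒻, #F = 3)
    (hVC : ∀ F ∈ 𝒻, ¬ 𝒻.Shatters F) : #𝒻 ≤ (#V - 1).choose 2 + 1 :=
  Unshattered.card_le ⟨hsub, hcard, hVC⟩ hV

/-- If `n ≥ 7` and `𝒻` is a family of 3-element subsets of `[n]` that shatters no
3-element subset of `[n]`, then `|𝒻| ≤ C(n-1,2) + 1`. -/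
theorem stmt_0 (n : ℕ) (hn : 7 ≤ n) (𝒻 : Finset (Finset ℕ))
    (hsub : ∀ F ∈ 𝒻, F ⊆ Finset.Icc 1 n) (hcard : ∀ F ∈ 𝒻, F.card = 3)
    (hVC : ∀ S ⊆ Finset.Icc 1 n, S.card = 3 → ¬ Shatters 𝒻 S) :
    𝒻.card ≤ (n - 1).choose 2 + 1 := by
  have hshatters : ∀ F ∈ 𝒻, ¬ 𝒻.Shatters F := fun F hF h =>
    hVC F (hsub F hF) (hcard F hF) fun T hT => by simpa only [inter_comm] using h hT
  simpa using stmt_0_general (V := Icc 1 n) (by simpa using hn) hsub hcard hshatters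
end

section
/- Every family 𝒻 of 3-element subsets of [6] that shatters no 3-element subset of [6] satisfies |𝒻| ≤ 13. -/
/-!
Let `𝒰` consist of the members of `𝒻` whose complement in the ground set `A` also lies in `𝒻`.
As `𝒻` and the family of its complements share the 20 triples of `A`, we have
`2 * #𝒻 ≤ 20 + #𝒰`, so it suffices that `#𝒰 ≤ 6`.

If `S ∈ 𝒰` misses the trace `R`, then `R` is neither `∅` nor `S`, so it is `{x}` or `S \ {x}` for
some `x`. In both cases `x` lies in every `T ∈ 𝒰` with `#(S ∩ T) = 2`: otherwise `A \ T` in the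
first case, and `T` in the second, would have trace `R`. Call such an `x` a pivot of `S`.

Let `x` be a pivot of `S ∈ 𝒰` and `y` a pivot of `A \ S`. The members of `𝒰` through `x` other than
`S` have the form `{x, u, v}` with `(u, v)` in the 2 × 2 grid `(S \ {x}) × ((A \ S) \ {y})`. Any
three cells of this grid form a corner `(u, v)`, `(u, v')`, `(u', v)`; but `A \ {x, u, v'}`,
`{x, u, v}` and `S` cut out the three pairs inside `{x, u', v}`, which would then have no pivot.
Hence at most 1 + 2 members of `𝒰` contain `x`, and by complementation `#𝒰 ≤ 6`.
-/

section

open Finset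

theorem card_le_two_of_no_corner {α β : Type*} {X : Finset α} {Y : Finset β}
    {P : Finset (α × β)} (hX : #X = 2) (hY : #Y = 2) (hP : P ⊆ X ×ˢ Y)
    (hcorner : ∀ u u' v v', (u, v) ∈ P → (u, v') ∈ P → (u', v) ∈ P → u = u' ∨ v = v') :
    #P ≤ 2 := by
  classical
  by_contra! hlt
  obtain ⟨p, q, r, hp, hq, hr, hpq, hpr, hqr⟩ := two_lt_card_iff.1 hlt
  obtain ⟨u, u', -, rfl⟩ := card_eq_two.1 hX
  obtain ⟨v, v', -, rfl⟩ := card_eq_two.1 hY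
  have hp_mem := hP hp
  have hq_mem := hP hq
  have hr_mem := hP hr
  grind

variable {α : Type*} [DecidableEq α] {A S T : Finset α} {𝒻 𝒰 : Finset (Finset α)} {x y : α}

/-- The members of `𝒻` whose complement in the ground set `A` is also in `𝒻`. -/
def complementaryPart (A : Finset α) (𝒻 : Finset (Finset α)) : Finset (Finset α) :=
  {S ∈ 𝒻 | A \ S ∈ 𝒻}

/-- `x` is a pivot of `S` in `𝒰` if it is a point of `S` common to all members of `𝒰` that meet `S`
in exactly two points. Within the complementary part of a family of triples, this is what a trace
missing on `S` leaves behind. -/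
def IsPivot (𝒰 : Finset (Finset α)) (S : Finset α) (x : α) : Prop :=
  x ∈ S ∧ ∀ T ∈ 𝒰, #(S ∩ T) = 2 → x ∈ T

theorem sdiff_mem_complementaryPart (hSA : S ⊆ A) (hS : S ∈ complementaryPart A 𝒻) :
    A \ S ∈ complementaryPart A 𝒻 := by
  obtain ⟨hS, hS'⟩ := mem_filter.1 hS
  exact mem_filter.2 ⟨hS', by rwa [Finset.sdiff_sdiff_eq_self hSA]⟩

theorem injOn_sdiff (hsub : ∀ S ∈ 𝒻, S ⊆ A) : Set.InjOn (A \ ·) (𝒻 : Set (Finset α)) :=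
  fun S hS T hT h => (sdiff_right_inj (hsub S hS) (hsub T hT)).1 h

theorem two_mul_card_le_choose_add_card_complementaryPart {k : ℕ} (hA : #A = 2 * k)
    (h𝒻 : 𝒻 ⊆ A.powersetCard k) :
    2 * #𝒻 ≤ (2 * k).choose k + #(complementaryPart A 𝒻) := by
  have hsub : ∀ S ∈ 𝒻, S ⊆ A := fun S hS => (mem_powersetCard.1 (h𝒻 hS)).1
  have hcard : #(𝒻.image (A \ ·)) = #𝒻 := card_image_of_injOn (injOn_sdiff hsub)
  have hunion : 𝒻 ∪ 𝒻.image (A \ ·) ⊆ A.powersetCard k := by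
    refine union_subset h𝒻 (image_subset_iff.2 fun S hS => mem_powersetCard.2 ⟨sdiff_subset, ?_⟩)
    rw [card_sdiff_of_subset (hsub S hS), (mem_powersetCard.1 (h𝒻 hS)).2]
    lia
  have hinter : 𝒻 ∩ 𝒻.image (A \ ·) ⊆ complementaryPart A 𝒻 := fun S hS => by
    obtain ⟨hS, hS'⟩ := mem_inter.1 hS
    obtain ⟨T, hT, rfl⟩ := mem_image.1 hS'
    exact mem_filter.2 ⟨hS, by rwa [Finset.sdiff_sdiff_eq_self (hsub T hT)]⟩
  calc 2 * #𝒻 = #(𝒻 ∪ 𝒻.image (A \ ·)) + #(𝒻 ∩ 𝒻.image (A \ ·)) := by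
        rw [card_union_add_card_inter, hcard, two_mul]
    _ ≤ #(A.powersetCard k) + #(complementaryPart A 𝒻) :=
        Nat.add_le_add (card_le_card hunion) (card_le_card hinter)
    _ = _ := by rw [card_powersetCard, hA]

theorem card_le_two_mul_card_filter_mem (hsub : ∀ S ∈ 𝒰, S ⊆ A)
    (hcompl : ∀ S ∈ 𝒰, A \ S ∈ 𝒰) (hx : x ∈ A) : #𝒰 ≤ 2 * #{S ∈ 𝒰 | x ∈ S} := by
  have hle : #{S ∈ 𝒰 | x ∉ S} ≤ #{S ∈ 𝒰 | x ∈ S} := by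
    refine card_le_card_of_injOn (A \ ·) (fun S hS => ?_)
      (injOn_sdiff fun S hS => hsub S (mem_filter.1 hS).1)
    obtain ⟨hS, hxS⟩ := mem_filter.1 hS
    exact mem_filter.2 ⟨hcompl S hS, mem_sdiff.2 ⟨hx, hxS⟩⟩
  rw [← card_filter_add_card_filter_not (s := 𝒰) (x ∈ ·)]
  lia

theorem exists_isPivot_of_not_shatters (hS : S ∈ complementaryPart A 𝒻) (hcard : #S = 3)
    (hSA : S ⊆ A) (hshatter : ¬ 𝒻.Shatters S) : ∃ x, IsPivot (complementaryPart A 𝒻) S x := by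
  obtain ⟨hS𝒻, hS𝒻'⟩ := mem_filter.1 hS
  obtain ⟨R, hRS, hR⟩ : ∃ R ⊆ S, ∀ F ∈ 𝒻, S ∩ F ≠ R := by
    simpa only [Finset.Shatters, not_forall, not_exists, not_and, exists_prop] using hshatter
  have hR_ne_self : R ≠ S := fun h => hR S hS𝒻 (by rw [inter_self, h])
  have hR_ne_empty : R ≠ ∅ := fun h => hR _ hS𝒻' (by rw [inter_sdiff_self, h])
  have hlt : #R < 3 := hcard ▸ card_lt_card (hRS.ssubset_of_ne hR_ne_self)
  have hpos : 0 < #R := card_pos.2 (nonempty_iff_ne_empty.2 hR_ne_empty)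
  obtain hR1 | hR2 : #R = 1 ∨ #R = 2 := by lia
  · obtain ⟨x, rfl⟩ := card_eq_one.1 hR1
    refine ⟨x, singleton_subset_iff.1 hRS, fun T hT hST => by_contra fun hxT => ?_⟩
    have hxS : x ∈ S := singleton_subset_iff.1 hRS
    refine hR _ (mem_filter.1 hT).2 (eq_of_subset_of_card_le ?_ ?_).symm
    · exact singleton_subset_iff.2 (mem_inter.2 ⟨hxS, mem_sdiff.2 ⟨hSA hxS, hxT⟩⟩)
    · rw [← inter_sdiff_assoc, inter_eq_left.2 hSA, card_sdiff, inter_comm, hST, hcard,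
        card_singleton]
  · obtain ⟨x, hxS, hxR⟩ := exists_of_ssubset (hRS.ssubset_of_ne hR_ne_self)
    have herase : #(S.erase x) = 2 := by rw [card_erase_of_mem hxS, hcard]
    have hR_eq : R = S.erase x :=
      eq_of_subset_of_card_le (subset_erase.2 ⟨hRS, hxR⟩) (by lia)
    refine ⟨x, hxS, fun T hT hST => by_contra fun hxT => hR T (mem_filter.1 hT).1 ?_⟩
    rw [hR_eq]
    exact eq_of_subset_of_card_le
      (subset_erase.2 ⟨inter_subset_left, fun hx => hxT (mem_inter.1 hx).2⟩) (by lia)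

theorem not_isPivot_triple {a b c z : α} {T₁ T₂ T₃ : Finset α} (h₁ : T₁ ∈ 𝒰) (h₂ : T₂ ∈ 𝒰)
    (h₃ : T₃ ∈ 𝒰) (ha₁ : a ∉ T₁) (hb₁ : b ∈ T₁) (hc₁ : c ∈ T₁) (ha₂ : a ∈ T₂) (hb₂ : b ∉ T₂)
    (hc₂ : c ∈ T₂) (ha₃ : a ∈ T₃) (hb₃ : b ∈ T₃) (hc₃ : c ∉ T₃) : ¬ IsPivot 𝒰 {a, b, c} z := by
  rintro ⟨hz, hzT⟩
  have hz₁ : z ∈ T₁ := hzT T₁ h₁ (by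
    rw [insert_inter_of_notMem ha₁, insert_inter_of_mem hb₁, singleton_inter_of_mem hc₁,
      card_pair (ne_of_mem_of_not_mem hc₂ hb₂).symm])
  have hz₂ : z ∈ T₂ := hzT T₂ h₂ (by
    rw [insert_inter_of_mem ha₂, insert_inter_of_notMem hb₂, singleton_inter_of_mem hc₂,
      card_pair (ne_of_mem_of_not_mem hc₁ ha₁).symm])
  have hz₃ : z ∈ T₃ := hzT T₃ h₃ (by
    rw [insert_inter_of_mem ha₃, insert_inter_of_mem hb₃, singleton_inter_of_notMem hc₃,
      insert_empty_eq, card_pair (ne_of_mem_of_not_mem hb₁ ha₁).symm])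
  simp only [mem_insert, mem_singleton] at hz
  obtain rfl | rfl | rfl := hz
  · exact ha₁ hz₁
  · exact hb₂ hz₂
  · exact hc₃ hz₃

theorem eq_or_eq_of_triple_mem {u u' v v' : α} (hcompl : ∀ S ∈ 𝒰, A \ S ∈ 𝒰)
    (hpivot : ∀ S ∈ 𝒰, ∃ x, IsPivot 𝒰 S x) (hS : S ∈ 𝒰) (hSA : S ⊆ A) (hx : x ∈ S)
    (hu : u ∈ S) (hu' : u' ∈ S.erase x) (hv : v ∈ A \ S) (hv' : v' ∉ S)
    (huv : {x, u, v} ∈ 𝒰) (huv' : {x, u, v'} ∈ 𝒰) (hu'v : {x, u', v} ∈ 𝒰) : u = u' ∨ v = v' := by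
  by_contra! ⟨huu', hvv'⟩
  obtain ⟨z, hz⟩ := hpivot _ hu'v
  obtain ⟨hu'x, hu'S⟩ := mem_erase.1 hu'
  obtain ⟨hvA, hvS⟩ := mem_sdiff.1 hv
  have hu_ne_v : u ≠ v := ne_of_mem_of_not_mem hu hvS
  have hvx : v ≠ x := (ne_of_mem_of_not_mem hx hvS).symm
  have hu'_ne_v : u' ≠ v := ne_of_mem_of_not_mem hu'S hvS
  have hu'_ne_v' : u' ≠ v' := ne_of_mem_of_not_mem hu'S hv'
  have hx₁ : x ∉ A \ {x, u, v'} := by simp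
  have hu'₁ : u' ∈ A \ {x, u, v'} := by simp [hSA hu'S, hu'x, huu'.symm, hu'_ne_v']
  have hv₁ : v ∈ A \ {x, u, v'} := by simp [hvA, hvx, hu_ne_v.symm, hvv']
  have hu'₂ : u' ∉ ({x, u, v} : Finset α) := by simp [hu'x, huu'.symm, hu'_ne_v]
  exact not_isPivot_triple (hcompl _ huv') huv hS hx₁ hu'₁ hv₁
    (by simp) hu'₂ (by simp) hx hu'S hvS hz

theorem IsPivot.card_inter_ne_one (hx : IsPivot 𝒰 S x) (hSA : S ⊆ A) (hScard : #S = 3)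
    (hT : A \ T ∈ 𝒰) (hxT : x ∈ T) : #(S ∩ T) ≠ 1 := fun h => by
  have hinter : #(S ∩ (A \ T)) = 2 := by
    rw [← inter_sdiff_assoc, inter_eq_left.2 hSA, card_sdiff, inter_comm, hScard, h]
  exact (mem_sdiff.1 (hx.2 _ hT hinter)).2 hxT

theorem IsPivot.notMem_of_card_inter_eq_two (hy : IsPivot 𝒰 (A \ S) y) (hA : #A = 6)
    (hS : S ∈ A.powersetCard 3) (hT : T ∈ A.powersetCard 3) (hTc : A \ T ∈ 𝒰)
    (hST : #(S ∩ T) = 2) : y ∉ T := by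
  obtain ⟨hSA, hScard⟩ := mem_powersetCard.1 hS
  obtain ⟨hTA, hTcard⟩ := mem_powersetCard.1 hT
  have hinter : #((A \ S) ∩ (A \ T)) = 2 := by
    rw [← sdiff_union_distrib, card_sdiff_of_subset (union_subset hSA hTA), card_union,
      hA, hScard, hTcard, hST]
  exact (mem_sdiff.1 (hy.2 _ hTc hinter)).2

theorem exists_eq_triple_of_card_inter_eq_two (hT : #T = 3) (hST : #(S ∩ T) = 2)
    (hx : x ∈ S ∩ T) : ∃ u ∈ S.erase x, ∃ v ∈ T \ S, T = {x, u, v} := by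
  obtain ⟨u, hu⟩ : ∃ u, (S ∩ T).erase x = {u} :=
    card_eq_one.1 (by rw [card_erase_of_mem hx, hST])
  obtain ⟨v, hv⟩ : ∃ v, T \ S = {v} := card_eq_one.1 (by rw [card_sdiff, hT, hST])
  obtain ⟨hux, huST⟩ := mem_erase.1 (hu ▸ mem_singleton_self u)
  refine ⟨u, mem_erase.2 ⟨hux, (mem_inter.1 huST).1⟩, v, hv ▸ mem_singleton_self v, ?_⟩
  rw [← sdiff_union_inter T S, inter_comm, ← insert_erase hx, hu, hv, union_comm,
    insert_union, singleton_union]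

theorem eq_or_exists_eq_triple (hA : #A = 6) (hsub : 𝒰 ⊆ A.powersetCard 3)
    (hcompl : ∀ S ∈ 𝒰, A \ S ∈ 𝒰) (hS : S ∈ 𝒰) (hx : IsPivot 𝒰 S x) (hy : IsPivot 𝒰 (A \ S) y)
    (hT : T ∈ 𝒰) (hxT : x ∈ T) :
    T = S ∨ ∃ u ∈ S.erase x, ∃ v ∈ (A \ S).erase y, T = {x, u, v} := by
  obtain ⟨hSA, hScard⟩ := mem_powersetCard.1 (hsub hS)
  obtain ⟨hTA, hTcard⟩ := mem_powersetCard.1 (hsub hT)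
  have hx_mem : x ∈ S ∩ T := mem_inter.2 ⟨hx.1, hxT⟩
  have hpos : 0 < #(S ∩ T) := card_pos.2 ⟨x, hx_mem⟩
  have hle : #(S ∩ T) ≤ 3 := hScard ▸ card_le_card inter_subset_left
  have hne_one : #(S ∩ T) ≠ 1 := hx.card_inter_ne_one hSA hScard (hcompl T hT) hxT
  obtain h3 | h2 : #(S ∩ T) = 3 ∨ #(S ∩ T) = 2 := by lia
  · have hinter : S ∩ T = S := eq_of_subset_of_card_le inter_subset_left (by lia)
    exact .inl (eq_of_subset_of_card_le (inter_eq_left.1 hinter) (by lia)).symm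
  · have hyT : y ∉ T := hy.notMem_of_card_inter_eq_two hA (hsub hS) (hsub hT) (hcompl T hT) h2
    obtain ⟨u, hu, v, hv, hT_eq⟩ := exists_eq_triple_of_card_inter_eq_two hTcard h2 hx_mem
    obtain ⟨hvT, hvS⟩ := mem_sdiff.1 hv
    exact .inr ⟨u, hu, v, mem_erase.2 ⟨ne_of_mem_of_not_mem hvT hyT,
      mem_sdiff.2 ⟨hTA hvT, hvS⟩⟩, hT_eq⟩

theorem card_filter_pivot_mem_le_three (hA : #A = 6) (hsub : 𝒰 ⊆ A.powersetCard 3)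
    (hcompl : ∀ S ∈ 𝒰, A \ S ∈ 𝒰) (hpivot : ∀ S ∈ 𝒰, ∃ x, IsPivot 𝒰 S x) (hS : S ∈ 𝒰)
    (hx : IsPivot 𝒰 S x) : #{T ∈ 𝒰 | x ∈ T} ≤ 3 := by
  obtain ⟨y, hy⟩ := hpivot _ (hcompl S hS)
  obtain ⟨hSA, hScard⟩ := mem_powersetCard.1 (hsub hS)
  have hX : #(S.erase x) = 2 := by rw [card_erase_of_mem hx.1, hScard]
  have hY : #((A \ S).erase y) = 2 := by
    rw [card_erase_of_mem hy.1, card_sdiff_of_subset hSA, hA, hScard]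
  let P := {p ∈ S.erase x ×ˢ (A \ S).erase y | {x, p.1, p.2} ∈ 𝒰}
  have hcover : {T ∈ 𝒰 | x ∈ T} ⊆ insert S (P.image fun p => {x, p.1, p.2}) := fun T hT => by
    obtain ⟨hT, hxT⟩ := mem_filter.1 hT
    obtain rfl | ⟨u, hu, v, hv, rfl⟩ := eq_or_exists_eq_triple hA hsub hcompl hS hx hy hT hxT
    · exact mem_insert_self _ _
    · exact mem_insert_of_mem
        (mem_image.2 ⟨(u, v), mem_filter.2 ⟨mk_mem_product hu hv, hT⟩, rfl⟩)
  have hP : #P ≤ 2 := by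
    refine card_le_two_of_no_corner hX hY (filter_subset _ _) fun u u' v v' huv huv' hu'v => ?_
    simp only [P, mem_filter, mem_product] at huv huv' hu'v
    exact eq_or_eq_of_triple_mem hcompl hpivot hS hSA hx.1 (mem_of_mem_erase huv.1.1) hu'v.1.1
      (mem_of_mem_erase huv.1.2) (mem_sdiff.1 (mem_of_mem_erase huv'.1.2)).2 huv.2 huv'.2 hu'v.2
  calc #{T ∈ 𝒰 | x ∈ T} ≤ #(P.image fun p => ({x, p.1, p.2} : Finset α)) + 1 :=
        (card_le_card hcover).trans (card_insert_le _ _)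
    _ ≤ 3 := Nat.succ_le_succ (card_image_le.trans hP)

theorem card_le_six_of_forall_exists_isPivot (hA : #A = 6) (hsub : 𝒰 ⊆ A.powersetCard 3)
    (hcompl : ∀ S ∈ 𝒰, A \ S ∈ 𝒰) (hpivot : ∀ S ∈ 𝒰, ∃ x, IsPivot 𝒰 S x) : #𝒰 ≤ 6 := by
  obtain rfl | ⟨S, hS⟩ := 𝒰.eq_empty_or_nonempty
  · simp
  obtain ⟨x, hx⟩ := hpivot S hS
  have hsubset : ∀ T ∈ 𝒰, T ⊆ A := fun T hT => (mem_powersetCard.1 (hsub hT)).1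
  exact (card_le_two_mul_card_filter_mem hsubset hcompl (hsubset S hS hx.1)).trans
    (Nat.mul_le_mul_left 2 (card_filter_pivot_mem_le_three hA hsub hcompl hpivot hS hx))

theorem stmt_2_general (hA : #A = 6) (h𝒻 : 𝒻 ⊆ A.powersetCard 3)
    (hVC : ∀ S ∈ 𝒻, ¬ 𝒻.Shatters S) : #𝒻 ≤ 13 := by
  have hmem : complementaryPart A 𝒻 ⊆ 𝒻 := filter_subset _ _
  have hsub : complementaryPart A 𝒻 ⊆ A.powersetCard 3 := hmem.trans h𝒻
  have hpairs : #(complementaryPart A 𝒻) ≤ 6 := by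
    refine card_le_six_of_forall_exists_isPivot hA hsub (fun S hS => ?_) fun S hS => ?_
    · exact sdiff_mem_complementaryPart (mem_powersetCard.1 (hsub hS)).1 hS
    · obtain ⟨hSA, hScard⟩ := mem_powersetCard.1 (hsub hS)
      exact exists_isPivot_of_not_shatters hS hScard hSA (hVC S (hmem hS))
  have hcount : 2 * #𝒻 ≤ 20 + #(complementaryPart A 𝒻) :=
    two_mul_card_le_choose_add_card_complementaryPart (k := 3) hA h𝒻
  lia

end

/-- Every family of 3-element subsets of `[6]` that shatters no 3-element subset of `[6]`
has at most 13 members. -/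
theorem stmt_2 (𝒻 : Finset (Finset ℕ))
    (hsub : ∀ F ∈ 𝒻, F ⊆ Finset.Icc 1 6) (hcard : ∀ F ∈ 𝒻, F.card = 3)
    (hVC : ∀ S ⊆ Finset.Icc 1 6, S.card = 3 → ¬ Shatters 𝒻 S) :
    𝒻.card ≤ 13 :=
  stmt_2_general (A := Finset.Icc 1 6) rfl
    (fun F hF => Finset.mem_powersetCard.2 ⟨hsub F hF, hcard F hF⟩) fun S hS hshatter =>
      hVC S (hsub S hS) (hcard S hS) fun T hT => by
        simpa only [Finset.inter_comm S] using hshatter hT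
end

section
/- Every family 𝒻 of 3-element subsets of [7] that shatters no 3-element subset of [7] satisfies |𝒻| ≤ C(6, 2) + 1 = 16. -/
/-!
Call a set `T ⊆ S` missing at `S` if it is not the trace on `S` of a member of the family `𝒜`. Let
`𝒰` be the set of all triples outside `𝒜`. That `T` is missing at `S` means that `𝒰` contains all
triples with trace `T` on `S`, so each triple `S` provides a list of sets of triples, one for each
`T ⊆ S`, of which `𝒰` must contain at least one. If `𝒜` had `17` members, then `𝒰` would have only
`18`, and a branching search that lets `𝒰` grow shows that this is too few. The search starts from a
single missing trace at a member of `𝒜`, which can be moved to `{0, …, k - 1}` at `{0, 1, 2}` by a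
labelling of the points; it first treats `k = 1`, then `k = 2` when no singleton is missing at a
member of `𝒜`, and finally `k = 0` when only the empty set is.
-/

namespace ShatteringSearch

open Finset

section Bitmask

/-- The natural number that encodes the finite set `s`, the element `a` being represented by the
binary digit at place `f a`. -/
def bitmask {α : Type*} (f : α → ℕ) (s : Finset α) : ℕ := ∑ a ∈ s, 2 ^ f a

variable {α : Type*} {f : α → ℕ} {s t : Finset α}

theorem bitmask_eq_sum_image (hf : Set.InjOn f s) : bitmask f s = ∑ i ∈ s.image f, 2 ^ i :=
  (sum_image hf).symm

theorem testBit_bitmask (hf : Set.InjOn f s) {i : ℕ} :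
    (bitmask f s).testBit i ↔ i ∈ s.image f := by
  rw [bitmask_eq_sum_image hf, ← Nat.mem_bitIndices, ← List.mem_toFinset,
    toFinset_bitIndices_sum_two_pow]

theorem bitmask_of_image_eq_range (hf : Set.InjOn f s) {n : ℕ} (h : s.image f = range n) :
    bitmask f s = 2 ^ n - 1 := by
  rw [bitmask_eq_sum_image hf, h, Nat.geomSum_eq le_rfl, Nat.div_one]

theorem bitmask_injOn {X : Finset α} (hf : Set.InjOn f X) :
    Set.InjOn (bitmask f) {s | s ⊆ X} := by
  intro s hs t ht h
  refine image_injOn_powerset_of_injOn hf (by simpa using hs) (by simpa using ht) (ext fun i => ?_)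
  rw [← testBit_bitmask (hf.mono (coe_subset.2 hs)), h,
    testBit_bitmask (hf.mono (coe_subset.2 ht))]

theorem bitmask_lt {X : Finset α} (hf : Set.InjOn f X) {n : ℕ} (hX : X.image f = range n)
    (hs : s ⊆ X) : bitmask f s < 2 ^ n :=
  calc bitmask f s ≤ bitmask f X := sum_le_sum_of_subset hs
    _ = 2 ^ n - 1 := bitmask_of_image_eq_range hf hX
    _ < 2 ^ n := Nat.sub_one_lt (NeZero.ne _)

theorem exists_bitmask_eq {X : Finset α} (hf : Set.InjOn f X) {n : ℕ} (hX : X.image f = range n)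
    {m : ℕ} (hm : m < 2 ^ n) : ∃ s ⊆ X, bitmask f s = m := by
  refine ⟨{a ∈ X | m.testBit (f a)}, filter_subset _ _,
    Nat.eq_of_testBit_eq fun i => Bool.eq_iff_iff.2 ?_⟩
  rw [testBit_bitmask (hf.mono (coe_subset.2 (filter_subset _ _)))]
  simp only [mem_image, mem_filter]
  refine ⟨fun ⟨_, ⟨_, ha⟩, hai⟩ => hai ▸ ha, fun hi => ?_⟩
  have hiX : i ∈ X.image f := by
    rw [hX, mem_range]
    by_contra! hni
    have hlt : m < 2 ^ i := hm.trans_le (Nat.pow_le_pow_right two_pos hni)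
    exact Bool.false_ne_true ((Nat.testBit_lt_two_pow hlt).symm.trans hi)
  obtain ⟨a, ha, rfl⟩ := mem_image.1 hiX
  exact ⟨a, ⟨ha, hi⟩, rfl⟩

variable [DecidableEq α]

theorem bitmask_union (hf : Set.InjOn f ↑(s ∪ t)) :
    bitmask f (s ∪ t) = bitmask f s ||| bitmask f t := by
  refine Nat.eq_of_testBit_eq fun i => Bool.eq_iff_iff.2 ?_
  rw [Nat.testBit_or, Bool.or_eq_true, testBit_bitmask hf,
    testBit_bitmask (hf.mono (coe_subset.2 subset_union_left)),
    testBit_bitmask (hf.mono (coe_subset.2 subset_union_right)), image_union, mem_union]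

theorem bitmask_inter (hf : Set.InjOn f ↑(s ∪ t)) :
    bitmask f (s ∩ t) = bitmask f s &&& bitmask f t := by
  have hs : (s : Set α) ⊆ ↑(s ∪ t) := coe_subset.2 subset_union_left
  have ht : (t : Set α) ⊆ ↑(s ∪ t) := coe_subset.2 subset_union_right
  refine Nat.eq_of_testBit_eq fun i => Bool.eq_iff_iff.2 ?_
  rw [Nat.testBit_and, Bool.and_eq_true,
    testBit_bitmask (hf.mono ((coe_subset.2 inter_subset_left).trans hs)),
    testBit_bitmask (hf.mono hs), testBit_bitmask (hf.mono ht),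
    image_inter_of_injOn _ _ (by rwa [← coe_union]), mem_inter]

theorem bitmask_six_mul_mod {s : Finset ℕ} (hs : #s < 63) : bitmask (6 * ·) s % 63 = #s := by
  rw [bitmask, sum_nat_mod, sum_congr rfl fun i _ => show 2 ^ (6 * i) % 63 = 1 by
    rw [pow_mul, Nat.pow_mod]; simp]
  simpa using Nat.mod_eq_of_lt hs

theorem six_mul_injective : Function.Injective (6 * · : ℕ → ℕ) :=
  mul_right_injective₀ (by norm_num)

end Bitmask

section Labelling

variable {α : Type*}

theorem image_idxOf_append [DecidableEq α] {l₁ : List α} (h : l₁.Nodup) (l₂ : List α) :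
    l₁.toFinset.image (l₁ ++ l₂).idxOf = range l₁.length := by
  refine eq_of_subset_of_card_le (image_subset_iff.2 fun a ha => ?_) ?_
  · rw [List.mem_toFinset] at ha
    rw [List.idxOf_append_of_mem ha]
    exact mem_range.2 (List.idxOf_lt_length_of_mem ha)
  · rw [card_range, card_image_of_injOn, List.toFinset_card_of_nodup h]
    intro a ha b _ hab
    exact (List.idxOf_inj (List.mem_append_left _ (List.mem_toFinset.1 ha))).1 hab

theorem exists_labelling {X S T : Finset α} (hTS : T ⊆ S) (hSX : S ⊆ X) :
    ∃ f : α → ℕ, Set.InjOn f X ∧ X.image f = range #X ∧ S.image f = range #S ∧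
      T.image f = range #T := by
  classical
  have hnodup : (T.toList ++ (S \ T).toList ++ (X \ S).toList).Nodup := by
    simp only [List.nodup_append', nodup_toList, true_and, List.disjoint_left,
      List.mem_append, mem_toList, mem_sdiff]
    tauto
  have hS : (T.toList ++ (S \ T).toList).toFinset = S := by
    simp only [List.toFinset_append, toList_toFinset, union_sdiff_of_subset hTS]
  have hX : (T.toList ++ (S \ T).toList ++ (X \ S).toList).toFinset = X := by
    rw [List.toFinset_append, hS, toList_toFinset, union_sdiff_of_subset hSX]
  have image_range {l₁ : List α} (l₂ : List α) {Y : Finset α} (h : l₁.Nodup)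
      (hY : l₁.toFinset = Y) : Y.image (l₁ ++ l₂).idxOf = range #Y := by
    rw [← hY, image_idxOf_append h, List.toFinset_card_of_nodup h]
  have hXimage := image_range [] hnodup hX
  rw [List.append_nil] at hXimage
  refine ⟨_, card_image_iff.1 (by rw [hXimage, card_range]), hXimage,
    image_range _ hnodup.of_append_left hS, ?_⟩
  rw [List.append_assoc]
  exact image_range _ (nodup_toList T) (toList_toFinset T)

end Labelling

section Search

/-- `List.foldr`, written with the recursor so that the kernel evaluates it quickly. -/
noncomputable def fold {α β : Type} (f : α → β → β) (b : β) (l : List α) : β :=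
  List.rec (motive := fun _ => β) b (fun a _ ih => f a ih) l

/-- `cond`, written with the recursor so that the kernel evaluates it quickly. -/
noncomputable abbrev sel {α : Type} (c : Bool) (x y : α) : α :=
  Bool.rec (motive := fun _ => α) y x c

/-- A mask encodes a set by binary digits at places divisible by `6`: union is `|||`, and the size
is the residue modulo `63`. For a list `c` of masks, called a requirement, this computes the unions
of `out` and an option in `c`, and passes those of size at most `b` on to `unmet`, together with
the sum of the weights `2 ^ (b - size)`. If `out` already contains an option, `met` is returned. -/
noncomputable def weigh (b out : ℕ) (met : Bool) (unmet : ℕ → List ℕ → Bool) (c : List ℕ) : Bool :=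
  fold (fun o k w l =>
    (fun u => sel (Nat.beq u out) met
      (sel (Nat.ble (Nat.mod u 63) b)
        (k (Nat.add w (Nat.pow 2 (Nat.sub b (Nat.mod u 63)))) (u :: l))
        (k w l))) (Nat.lor o out))
    unmet c 0 []

/-- Calls `branch` on the other unmet requirements and the one of least weight, or on the first
one that has no option left. The starting values `[out]` and `2 ^ (b + 3)` stand for a requirement
that is selected only if all requirements are met. -/
noncomputable def select (b out : ℕ) (branch : List (List ℕ) → List ℕ → Bool)
    (cs : List (List ℕ)) : Bool :=
  fold (fun c k w d rest =>
    weigh b out (k w d rest)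
      (fun w' l => sel (Nat.beq w' 0) (branch rest l)
        (sel (Nat.ble w w') (k w d (l :: rest)) (k w' l (l :: rest)))) c)
    (fun _ d rest => branch rest d) cs (Nat.pow 2 (Nat.add b 3)) [out] []

/-- Whether branching to depth `k` shows that no set of size at most `b` contains `out` and an
option of each requirement in `cs`. -/
noncomputable def refutes (b k : ℕ) : List (List ℕ) → ℕ → Bool :=
  Nat.rec (motive := fun _ => List (List ℕ) → ℕ → Bool) (fun _ _ => false)
    (fun _ ih cs out => select b out
      (fun rest d => fold (fun o r => sel (ih rest o) r false) true d) cs) k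

/-- The requirement `c` is met by the set whose subsets have the masks satisfying `P`. -/
def Meets (P : ℕ → Prop) (c : List ℕ) : Prop := ∃ o ∈ c, P o

variable {P : ℕ → Prop} {b out : ℕ}

theorem meets_cons {o : ℕ} {c : List ℕ} : Meets P (o :: c) ↔ P o ∨ Meets P c := by
  simp [Meets]

theorem weigh_sound (hor : ∀ u v, P u → P v → P (u ||| v)) (hb : ∀ u, P u → u % 63 ≤ b)
    (hout : P out) {met : Bool} {unmet : ℕ → List ℕ → Bool} {c : List ℕ} (hc : Meets P c)
    (h : weigh b out met unmet c = true) :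
    met = true ∨ ∃ w l, Meets P l ∧ unmet w l = true := by
  unfold weigh at h
  replace hc : Meets P c ∨ Meets P [] := .inl hc
  generalize 0 = w, [] = l at h hc
  induction c generalizing w l with
  | nil => exact .inr ⟨w, l, hc.resolve_left (by simp [Meets]), h⟩
  | cons o c ih =>
    change sel (Nat.beq (o ||| out) out) met (sel (Nat.ble ((o ||| out) % 63) b) _ _) = true at h
    cases h₁ : Nat.beq (o ||| out) out with
    | true =>
      rw [h₁] at h
      exact .inl h
    | false =>
      rw [h₁] at h
      rw [meets_cons, or_assoc] at hc
      cases h₂ : Nat.ble ((o ||| out) % 63) b with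
      | true =>
        rw [h₂] at h
        refine ih _ _ h ?_
        rw [meets_cons, or_left_comm]
        exact hc.imp_left fun ho => hor _ _ ho hout
      | false =>
        rw [h₂] at h
        refine ih _ _ h (hc.resolve_left fun ho => ?_)
        exact absurd (Nat.ble_eq_true_of_le (hb _ (hor _ _ ho hout))) (by rw [h₂]; decide)

theorem select_sound (hor : ∀ u v, P u → P v → P (u ||| v)) (hb : ∀ u, P u → u % 63 ≤ b)
    (hout : P out) {branch : List (List ℕ) → List ℕ → Bool} {cs : List (List ℕ)}
    (hcs : ∀ c ∈ cs, Meets P c) (h : select b out branch cs = true) :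
    ∃ cs' d, (∀ c ∈ cs', Meets P c) ∧ Meets P d ∧ branch cs' d = true := by
  unfold select at h
  have hd : Meets P [out] := ⟨out, List.mem_singleton_self _, hout⟩
  have hrest : ∀ c ∈ ([] : List (List ℕ)), Meets P c := by simp
  generalize Nat.pow 2 (Nat.add b 3) = w, [out] = d, [] = rest at h hd hrest
  induction cs generalizing w d rest with
  | nil => exact ⟨rest, d, hrest, hd, h⟩
  | cons c cs ih =>
    obtain ⟨hc, hcs⟩ := List.forall_mem_cons.1 hcs
    obtain h | ⟨w', l, hl, h⟩ := weigh_sound hor hb hout hc h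
    · exact ih hcs _ _ _ h hd hrest
    have hrest' : ∀ c ∈ l :: rest, Meets P c := List.forall_mem_cons.2 ⟨hl, hrest⟩
    dsimp only at h
    cases h₁ : Nat.beq w' 0 <;> rw [h₁] at h
    · cases h₂ : Nat.ble w w' <;> rw [h₂] at h
      · exact ih hcs _ _ _ h hl hrest'
      · exact ih hcs _ _ _ h hd hrest'
    · exact ⟨rest, l, hrest, hl, h⟩

theorem forall_of_fold_sel {p : ℕ → Bool} {c : List ℕ}
    (h : fold (fun o r => sel (p o) r false) true c = true) : ∀ o ∈ c, p o = true := by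
  induction c with
  | nil => simp
  | cons o c ih =>
    change sel (p o) _ false = true at h
    cases ho : p o <;> rw [ho] at h
    · cases h
    · exact List.forall_mem_cons.2 ⟨ho, ih h⟩

theorem refutes_sound (hor : ∀ u v, P u → P v → P (u ||| v)) (hb : ∀ u, P u → u % 63 ≤ b)
    {k : ℕ} {cs : List (List ℕ)} (hout : P out)
    (h : refutes b k cs out = true) : ∃ c ∈ cs, ¬ Meets P c := by
  by_contra! hcs
  induction k generalizing cs out with
  | zero => cases h
  | succ k ih =>
    obtain ⟨cs', d, hcs', ⟨o, hod, ho⟩, hd⟩ := select_sound hor hb hout hcs h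
    exact ih ho (forall_of_fold_sel hd o hod) hcs'

end Search

section Triples

/-- The number of ones among the seven lowest binary digits of `m`. -/
def weight (m : ℕ) : ℕ := #{i ∈ range 7 | m.testBit i}

/-- The bitmasks of the `3`-element subsets of a `7`-element set. -/
def triples : Finset ℕ := {m ∈ range 128 | weight m = 3}

/-- The mask of the set of triples with trace `t` on `s`. -/
def traceMask (s t : ℕ) : ℕ := bitmask (6 * ·) {m ∈ triples | m &&& s = t}

/-- For each triple `s`, the requirement that a family has no member with trace `t` on `s`, for
some `t ⊆ s` that equals `s` or has its number of elements in `ks`. -/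
def requirements (ks : List ℕ) : List (List ℕ) :=
  ((List.range 128).filter (weight · = 3)).map fun s =>
    ((List.range 128).filter fun t => t &&& s = t ∧ (t = s ∨ weight t ∈ ks)).map (traceMask s)

variable {α : Type*} {X S T : Finset α} {𝒜 : Finset (Finset α)} {f : α → ℕ}

theorem weight_bitmask (hf : Set.InjOn f X) (hX : X.image f = range 7) (hS : S ⊆ X) :
    weight (bitmask f S) = #S := by
  have hSf : Set.InjOn f S := hf.mono (coe_subset.2 hS)
  simp only [weight, testBit_bitmask hSf]
  rw [filter_mem_eq_inter, inter_eq_right.2 (hX ▸ image_subset_image hS), card_image_of_injOn hSf]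

theorem image_bitmask_powersetCard (hf : Set.InjOn f X) (hX : X.image f = range 7) :
    (X.powersetCard 3).image (bitmask f) = triples := by
  ext m
  simp only [mem_image, mem_powersetCard, triples, mem_filter, mem_range]
  constructor
  · rintro ⟨S, ⟨hS, hcard⟩, rfl⟩
    exact ⟨bitmask_lt hf hX hS, (weight_bitmask hf hX hS).trans hcard⟩
  · rintro ⟨hm, hweight⟩
    obtain ⟨S, hS, rfl⟩ := exists_bitmask_eq hf hX hm
    exact ⟨S, ⟨hS, by rwa [← weight_bitmask hf hX hS]⟩, rfl⟩

/-- The bitmasks of the triples that are not in the family `𝒜`. -/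
def absent (f : α → ℕ) (𝒜 : Finset (Finset α)) : Finset ℕ := triples \ 𝒜.image (bitmask f)

theorem card_absent_add_card (hf : Set.InjOn f X) (hX : X.image f = range 7)
    (h𝒜 : 𝒜 ⊆ X.powersetCard 3) : #(absent f 𝒜) + #𝒜 = 35 := by
  have hinj : #(𝒜.image (bitmask f)) = #𝒜 :=
    card_image_of_injOn ((bitmask_injOn hf).mono fun F hF => (mem_powersetCard.1 (h𝒜 hF)).1)
  rw [absent, ← hinj, card_sdiff_add_card_eq_card]
  · decide +kernel
  · rw [← image_bitmask_powersetCard hf hX]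
    exact image_subset_image h𝒜

/-- `u` is the mask of a subset of `U`. -/
def IsPartialMask (U : Finset ℕ) (u : ℕ) : Prop := ∃ B ⊆ U, bitmask (6 * ·) B = u

theorem IsPartialMask.lor {U : Finset ℕ} {u v : ℕ} (hu : IsPartialMask U u)
    (hv : IsPartialMask U v) : IsPartialMask U (u ||| v) := by
  obtain ⟨A, hA, rfl⟩ := hu
  obtain ⟨B, hB, rfl⟩ := hv
  exact ⟨A ∪ B, union_subset hA hB, bitmask_union six_mul_injective.injOn⟩

theorem IsPartialMask.mod_le {U : Finset ℕ} {u : ℕ} (hU : #U < 63) (hu : IsPartialMask U u) :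
    u % 63 ≤ #U := by
  obtain ⟨A, hA, rfl⟩ := hu
  rw [bitmask_six_mul_mod ((card_le_card hA).trans_lt hU)]
  exact card_le_card hA

variable [DecidableEq α]

/-- `T` is missing at `S`: it is a subset of `S` but not the trace on `S` of a member of `𝒜`. -/
def IsMissing (𝒜 : Finset (Finset α)) (S T : Finset α) : Prop :=
  T ⊆ S ∧ ∀ F ∈ 𝒜, S ∩ F ≠ T

theorem IsMissing.filter_subset_absent (hf : Set.InjOn f X) (h𝒜 : 𝒜 ⊆ X.powersetCard 3) (hS : S ⊆ X)
    (h : IsMissing 𝒜 S T) :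
    {m ∈ triples | m &&& bitmask f S = bitmask f T} ⊆ absent f 𝒜 := by
  intro m hm
  obtain ⟨hm, htrace⟩ := mem_filter.1 hm
  refine mem_sdiff.2 ⟨hm, fun hm𝒜 => ?_⟩
  obtain ⟨F, hF, rfl⟩ := mem_image.1 hm𝒜
  have hFX : F ⊆ X := (mem_powersetCard.1 (h𝒜 hF)).1
  rw [← bitmask_inter (hf.mono (coe_subset.2 (union_subset hFX hS))), inter_comm] at htrace
  exact h.2 F hF (bitmask_injOn hf (inter_subset_left.trans hS) (h.1.trans hS) htrace)

theorem isMissing_self {k : ℕ} (h𝒜 : 𝒜 ⊆ X.powersetCard k) (hS : S ∈ X.powersetCard k)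
    (hS𝒜 : S ∉ 𝒜) : IsMissing 𝒜 S S := by
  refine ⟨Subset.rfl, fun F hF hSF => hS𝒜 ?_⟩
  have hcard : #F ≤ #S := by rw [(mem_powersetCard.1 (h𝒜 hF)).2, (mem_powersetCard.1 hS).2]
  rwa [eq_of_subset_of_card_le (inter_eq_left.1 hSF) hcard]

theorem meets_of_mem_requirements (hf : Set.InjOn f X) (hX : X.image f = range 7)
    (h𝒜 : 𝒜 ⊆ X.powersetCard 3) {ks : List ℕ}
    (hks : ∀ S ∈ 𝒜, ∃ T, IsMissing 𝒜 S T ∧ #T ∈ ks) :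
    ∀ c ∈ requirements ks, Meets (IsPartialMask (absent f 𝒜)) c := by
  simp only [requirements, List.forall_mem_map, List.mem_filter, List.mem_range, decide_eq_true_eq]
  rintro s ⟨hs, hweight⟩
  obtain ⟨S, hS, rfl⟩ : ∃ S ∈ X.powersetCard 3, bitmask f S = s := by
    rw [← mem_image, image_bitmask_powersetCard hf hX]
    exact mem_filter.2 ⟨mem_range.2 hs, hweight⟩
  obtain ⟨T, hT, hcard⟩ : ∃ T, IsMissing 𝒜 S T ∧ (T = S ∨ #T ∈ ks) := by
    by_cases hS𝒜 : S ∈ 𝒜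
    · exact (hks S hS𝒜).imp fun _ => .imp_right .inr
    · exact ⟨S, isMissing_self h𝒜 hS hS𝒜, .inl rfl⟩
  have hSX := (mem_powersetCard.1 hS).1
  have hTX := hT.1.trans hSX
  refine ⟨traceMask _ (bitmask f T), List.mem_map_of_mem ?_,
    _, hT.filter_subset_absent hf h𝒜 hSX, rfl⟩
  simp only [List.mem_filter, List.mem_range, decide_eq_true_eq]
  rw [← bitmask_inter (hf.mono (coe_subset.2 (union_subset hTX hSX))), inter_eq_left.2 hT.1,
    weight_bitmask hf hX hTX]
  exact ⟨bitmask_lt hf hX hTX, rfl, hcard.imp_left (congrArg _)⟩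

theorem card_le_of_refutes (hX : #X = 7) (h𝒜 : 𝒜 ⊆ X.powersetCard 3) {ks : List ℕ} {k : ℕ}
    (hks : ∀ S ∈ 𝒜, ∃ T, IsMissing 𝒜 S T ∧ #T ∈ ks)
    (hk : ∃ S ∈ 𝒜, ∃ T, IsMissing 𝒜 S T ∧ #T = k)
    (hrefutes : refutes 18 18 (requirements ks) (traceMask 7 (2 ^ k - 1)) = true) :
    #𝒜 ≤ 16 := by
  by_contra! hlt
  obtain ⟨S, hS, T, hT, rfl⟩ := hk
  obtain ⟨hSX, hScard⟩ := mem_powersetCard.1 (h𝒜 hS)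
  obtain ⟨f, hf, hfX, hfS, hfT⟩ := exists_labelling hT.1 hSX
  rw [hX] at hfX
  have hcard : #(absent f 𝒜) ≤ 18 := by
    have := card_absent_add_card hf hfX h𝒜
    lia
  have hout : IsPartialMask (absent f 𝒜) (traceMask 7 (2 ^ #T - 1)) := by
    refine ⟨_, hT.filter_subset_absent hf h𝒜 hSX, ?_⟩
    rw [bitmask_of_image_eq_range (hf.mono (coe_subset.2 hSX)) hfS, hScard,
      bitmask_of_image_eq_range (hf.mono (coe_subset.2 (hT.1.trans hSX))) hfT]
    rfl
  obtain ⟨c, hc, hunmet⟩ := refutes_sound (fun _ _ => IsPartialMask.lor)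
    (fun _ hu => (hu.mod_le (by lia)).trans hcard) hout hrefutes
  exact hunmet (meets_of_mem_requirements hf hfX h𝒜 hks c hc)

theorem exists_isMissing_of_not_shatters (hS : S ∈ 𝒜) (h : ¬ 𝒜.Shatters S) :
    ∃ T, IsMissing 𝒜 S T ∧ #T < #S := by
  obtain ⟨T, hTS, hT⟩ : ∃ T ⊆ S, ∀ F ∈ 𝒜, S ∩ F ≠ T := by
    simpa only [Finset.Shatters, not_forall, not_exists, not_and, exists_prop] using h
  have hne : T ≠ S := fun hTS => hT S hS (by rw [inter_self, hTS])
  exact ⟨T, ⟨hTS, hT⟩, card_lt_card (hTS.ssubset_of_ne hne)⟩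

theorem refutes_singleton :
    refutes 18 18 (requirements [0, 1, 2]) (traceMask 7 (2 ^ 1 - 1)) = true := by
  decide +kernel

theorem refutes_pair :
    refutes 18 18 (requirements [0, 2]) (traceMask 7 (2 ^ 2 - 1)) = true := by
  decide +kernel

theorem refutes_empty :
    refutes 18 18 (requirements [0]) (traceMask 7 (2 ^ 0 - 1)) = true := by
  decide +kernel

end Triples

end ShatteringSearch

open Finset ShatteringSearch in
theorem stmt_3_general {α : Type*} [DecidableEq α] {X : Finset α} (hX : #X = 7)
    {𝒜 : Finset (Finset α)} (h𝒜 : 𝒜 ⊆ X.powersetCard 3) (h : ∀ S ∈ 𝒜, ¬ 𝒜.Shatters S) :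
    #𝒜 ≤ 16 := by
  have hmissing : ∀ S ∈ 𝒜, ∃ T, IsMissing 𝒜 S T ∧ #T ∈ [0, 1, 2] := fun S hS => by
    obtain ⟨T, hT, hcard⟩ := exists_isMissing_of_not_shatters hS (h S hS)
    rw [(mem_powersetCard.1 (h𝒜 hS)).2] at hcard
    exact ⟨T, hT, by simp only [List.mem_cons, List.not_mem_nil]; lia⟩
  by_cases hsingleton : ∃ S ∈ 𝒜, ∃ T, IsMissing 𝒜 S T ∧ #T = 1
  · exact card_le_of_refutes hX h𝒜 hmissing hsingleton refutes_singleton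
  replace hmissing : ∀ S ∈ 𝒜, ∃ T, IsMissing 𝒜 S T ∧ #T ∈ [0, 2] := by grind
  by_cases hpair : ∃ S ∈ 𝒜, ∃ T, IsMissing 𝒜 S T ∧ #T = 2
  · exact card_le_of_refutes hX h𝒜 hmissing hpair refutes_pair
  replace hmissing : ∀ S ∈ 𝒜, ∃ T, IsMissing 𝒜 S T ∧ #T ∈ [0] := by grind
  obtain rfl | ⟨S, hS⟩ := 𝒜.eq_empty_or_nonempty
  · simp
  · have hempty : ∃ S ∈ 𝒜, ∃ T, IsMissing 𝒜 S T ∧ #T = 0 := by grind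
    exact card_le_of_refutes hX h𝒜 hmissing hempty refutes_empty

/-- Every family of 3-element subsets of `[7]` that shatters no 3-element subset of `[7]`
has at most `C(6,2) + 1 = 16` members. -/
theorem stmt_3 (𝒻 : Finset (Finset ℕ))
    (hsub : ∀ F ∈ 𝒻, F ⊆ Finset.Icc 1 7) (hcard : ∀ F ∈ 𝒻, F.card = 3)
    (hVC : ∀ S ⊆ Finset.Icc 1 7, S.card = 3 → ¬ Shatters 𝒻 S) :
    𝒻.card ≤ Nat.choose 6 2 + 1 ∧ Nat.choose 6 2 + 1 = 16 :=
  ⟨stmt_3_general (X := Finset.Icc 1 7) (by simp)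
    (fun F hF => Finset.mem_powersetCard.2 ⟨hsub F hF, hcard F hF⟩)
    fun S hS h => hVC S (hsub S hS) (hcard S hS) fun T hT => by
      simpa only [Finset.inter_comm] using h hT, rfl⟩
end
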